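/- arXiv:2406.13687 — 6 statements merged into one kernel-verified Lean document; each statement's English description precedes it below -/
import Mathlib

section
/- Let A_n = [a_n, b_n] be a sequence of compact intervals in ℝ with b_n − a_n → ∞, and assume there exists a constant d > 0 such that |a_n| < d·(b_n − a_n) for all n. Then the counting autocorrelation of the set ℙ_pow of prime powers and their negatives with respect to (A_n) exists and equals δ_0: writing F_n = ℙ_pow ∩ A_n, for every continuous compactly supported f : ℝ → ℂ one has (1/card F_n)·Σ_{x,y∈F_n} f(x−y) → f(0) as n → ∞. -/
open Filter Topology Set

/-- The set of prime powers and their negatives, as a subset of `ℝ`. -/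
def PrimePowR : Set ℝ :=
  {x | ∃ p k : ℕ, p.Prime ∧ 1 ≤ k ∧ (x = ((p ^ k : ℕ) : ℝ) ∨ x = -((p ^ k : ℕ) : ℝ))}

/-- The (counting-normalised) autocorrelation sum of the finite sample `F` applied to a
test function `f`; interpreted as `0` when `F = ∅` (since then `(F.ncard : ℂ)⁻¹ = 0`). -/
noncomputable def autoCorr (F : Set ℝ) (f : ℝ → ℂ) : ℂ :=
  ((F.ncard : ℂ))⁻¹ * ∑ᶠ x ∈ F, ∑ᶠ y ∈ F, f (x - y)



/-! ### The function `G` -/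
noncomputable def GG (s : ℂ) : ℂ := - deriv riemannZeta₁ s / riemannZeta₁ s - riemannZeta₀ s

lemma zeta1_ne {s : ℂ} (hs : 1 ≤ s.re) : riemannZeta₁ s ≠ 0 := by
  by_cases h : s = 1
  · subst h; simp
  · intro h0
    have := riemannZeta_eq_inv_sub_mul h
    rw [h0, mul_zero] at this
    exact riemannZeta_ne_zero_of_one_le_re hs this

lemma GG_cont : ContinuousOn GG {s | 1 ≤ s.re} := by
  unfold GG
  have h1 : Continuous (deriv riemannZeta₁) :=
    (differentiable_riemannZeta₁.contDiff (n := 1)).continuous_deriv le_rfl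
  exact (h1.neg.continuousOn.div differentiable_riemannZeta₁.continuous.continuousOn
    (fun s hs => zeta1_ne hs)).sub differentiable_riemannZeta₀.continuous.continuousOn

lemma GG_eq {s : ℂ} (hs : 1 < s.re) :
    GG s = - deriv riemannZeta s / riemannZeta s - riemannZeta s := by
  have hs1 : s ≠ 1 := by rintro rfl; simp at hs
  have hz : riemannZeta₁ s ≠ 0 := zeta1_ne hs.le
  have hsub : s - 1 ≠ 0 := sub_ne_zero.2 hs1
  have hd := deriv_riemannZeta_eq_neg_inv_sub_sq_mul_add hs1
  have e1 := riemannZeta_eq_inv_sub_add hs1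
  have e2 := riemannZeta_eq_inv_sub_mul hs1
  have : - deriv riemannZeta s / riemannZeta s = (s-1)⁻¹ - deriv riemannZeta₁ s / riemannZeta₁ s := by
    rw [hd, e2]; field_simp; ring
  rw [this, e1, GG]; ring

lemma GG_hasSum {s : ℂ} (hs : 1 < s.re) :
    HasSum (fun n : ℕ => LSeries.term (fun n => (((ArithmeticFunction.vonMangoldt n - 1 : ℝ)) : ℂ)) s n) (GG s) := by
  have h1 := (ArithmeticFunction.LSeriesSummable_vonMangoldt hs).LSeriesHasSum
  rw [ArithmeticFunction.LSeries_vonMangoldt_eq_deriv_riemannZeta_div hs] at h1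
  have h2 := (LSeriesSummable_one_iff.2 hs).LSeriesHasSum
  rw [LSeries_one_eq_riemannZeta hs] at h2
  have h3 := h1.sub h2
  rw [← GG_eq hs] at h3
  unfold LSeriesHasSum at h3
  convert h3 using 2 with n
  ext m
  simp

/-! ### kernel -/
noncomputable def fker (l u : ℝ) : ℝ := ∫ t in (0:ℝ)..l, 2 * (1 - t / l) * Real.cos (t * u)

lemma fker_formula {l u : ℝ} (hl : 0 < l) (hu : u ≠ 0) : fker l u = 2 * (1 - Real.cos (l * u)) / (l * u^2) := by
  unfold fker
  have := intervalIntegral.integral_eq_sub_of_hasDerivAt (a := 0) (b := l)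
    (f := fun t => 2 * (1 - t / l) * Real.sin (t * u) / u - 2 * Real.cos (t*u) / (l*u^2))
    (f' := fun t => 2 * (1 - t / l) * Real.cos (t * u)) ?_ ?_
  · rw [this]; simp; field_simp; ring
  · intro t _
    have h1 : HasDerivAt (fun t : ℝ => 2 * (1 - t / l)) (2 * (-(1/l))) t := by
      simpa using (((hasDerivAt_id t).div_const l).const_sub 1).const_mul 2
    have h2 : HasDerivAt (fun t : ℝ => Real.sin (t * u)) (Real.cos (t*u) * u) t := by
      simpa using ((hasDerivAt_id t).mul_const u).sin
    have h3 : HasDerivAt (fun t : ℝ => Real.cos (t * u)) (-Real.sin (t*u) * u) t := by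
      simpa using ((hasDerivAt_id t).mul_const u).cos
    convert! ((h1.mul h2).div_const u).sub ((h3.const_mul 2).div_const (l*u^2)) using 1
    field_simp; ring
  · apply Continuous.intervalIntegrable; fun_prop

lemma fker_zero {l : ℝ} (hl : 0 < l) : ∫ t in (0:ℝ)..l, 2 * (1 - t / l) = l := by
  have := intervalIntegral.integral_eq_sub_of_hasDerivAt (a := 0) (b := l)
    (f := fun t => 2 * t - t^2 / l)
    (f' := fun t => 2 * (1 - t / l)) ?_ ?_
  · rw [this]; field_simp; ring
  · intro t _
    convert! ((hasDerivAt_id t).const_mul 2).sub ((hasDerivAt_pow 2 t).div_const l) using 1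
    simp; field_simp
  · apply Continuous.intervalIntegrable; fun_prop

lemma fker_le {l u : ℝ} (hl : 0 < l) : fker l u ≤ l := by
  conv_rhs => rw [← fker_zero hl]
  apply intervalIntegral.integral_mono_on hl.le
  · apply Continuous.intervalIntegrable; fun_prop
  · apply Continuous.intervalIntegrable; fun_prop
  · intro t ht
    have : 0 ≤ 2 * (1 - t/l) := by
      have : t / l ≤ 1 := (div_le_one hl).2 ht.2
      linarith
    nlinarith [Real.cos_le_one (t*u)]

lemma fker_ge {l u : ℝ} (hl : 0 < l) (hu : l * |u| ≤ 1) : l / 2 ≤ fker l u := by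
  have : l / 2 = ∫ t in (0:ℝ)..l, 2 * (1 - t / l) * (1/2) := by
    rw [intervalIntegral.integral_mul_const, fker_zero hl]; ring
  rw [this]
  apply intervalIntegral.integral_mono_on hl.le
  · apply Continuous.intervalIntegrable; fun_prop
  · apply Continuous.intervalIntegrable; fun_prop
  · intro t ht
    have : 0 ≤ 2 * (1 - t/l) := by
      have : t / l ≤ 1 := (div_le_one hl).2 ht.2
      linarith
    apply mul_le_mul_of_nonneg_left _ this
    have h1 : |t*u| ≤ 1 := by
      rw [abs_mul, abs_of_nonneg ht.1]
      exact (mul_le_mul_of_nonneg_right ht.2 (abs_nonneg _)).trans hu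
    have h2 := Real.one_sub_sq_div_two_le_cos (x := t*u)
    have h3 : (t*u)^2 ≤ 1 := by rw [← sq_abs]; nlinarith [abs_nonneg (t*u)]
    linarith

lemma fker_nonneg {l u : ℝ} (hl : 0 < l) : 0 ≤ fker l u := by
  by_cases hu : u = 0
  · have := fker_ge (l := l) (u := u) hl (by simp [hu]); linarith
  · rw [fker_formula hl hu]
    have := Real.cos_le_one (l*u)
    apply div_nonneg _ (by positivity); linarith

lemma fker_le' {l u : ℝ} (hl : 0 < l) (hu : u ≠ 0) : fker l u ≤ 4 / (l * u^2) := by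
  rw [fker_formula hl hu]
  have := Real.neg_one_le_cos (l*u)
  have : 0 < l * u^2 := by positivity
  gcongr; linarith


local notation "Λ" => ArithmeticFunction.vonMangoldt

lemma A2_term (s t x : ℝ) (hs : 1 < s) (n : ℕ) :
    (Complex.exp (Complex.I * t * x) *
      LSeries.term (fun n => (((Λ n - 1 : ℝ)) : ℂ)) (s + t * Complex.I) n).re
     = (Λ n - 1) * (n:ℝ)^(-s) * Real.cos (t * (Real.log n - x)) := by
  rcases Nat.eq_zero_or_pos n with rfl | hn
  · simp [Real.zero_rpow (by linarith : -s ≠ 0)]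
  have hn' : (0:ℝ) < n := by exact_mod_cast hn
  rw [LSeries.term_of_ne_zero hn.ne', div_eq_mul_inv, ← Complex.cpow_neg,
    Complex.cpow_def_of_ne_zero (by exact_mod_cast hn.ne'), ← Complex.natCast_log]
  rw [mul_left_comm, ← Complex.exp_add, Complex.re_ofReal_mul, Complex.exp_re, Real.rpow_def_of_pos hn',
    mul_assoc (Λ n - 1)]
  generalize Real.log n = L
  congr 2
  · congr 1; simp
  · rw [← Real.cos_neg]; congr 1; simp; ring

lemma A2_hasSum (s t x : ℝ) (hs : 1 < s) :
    HasSum (fun n : ℕ => (Λ n - 1) * (n:ℝ)^(-s) * Real.cos (t * (Real.log n - x)))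
      (Complex.exp (Complex.I * t * x) * GG (s + t * Complex.I)).re := by
  have h := (GG_hasSum (s := s + t * Complex.I) (by simpa using hs)).mul_left
    (Complex.exp (Complex.I * t * x))
  have h2 := Complex.hasSum_re h
  simpa only [A2_term s t x hs] using h2

lemma A2_summable (s : ℝ) (hs : 1 < s) :
    Summable (fun n : ℕ => |Λ n - 1| * (n:ℝ)^(-s)) := by
  have h := (GG_hasSum (s := (s:ℂ)) (by simpa using hs)).summable.norm
  refine h.congr fun n => ?_
  rcases Nat.eq_zero_or_pos n with rfl | hn
  · simp [Real.zero_rpow (by linarith : -s ≠ 0)]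
  have hn' : (0:ℝ) < n := by exact_mod_cast hn
  rw [LSeries.term_of_ne_zero hn.ne', norm_div, Complex.norm_natCast_cpow_of_pos hn,
    Complex.norm_real, Real.norm_eq_abs, Complex.ofReal_re, Real.rpow_neg hn'.le, div_eq_mul_inv]

noncomputable def RR (l s x : ℝ) : ℝ :=
  ∫ t in (0:ℝ)..l, 2 * (1 - t / l) * (Complex.exp (Complex.I * t * x) * GG (max s 1 + t * Complex.I)).re

lemma A2_main (l s x : ℝ) (hl : 0 < l) (hs : 1 < s) :
    HasSum (fun n : ℕ => (Λ n - 1) * (n:ℝ)^(-s) * fker l (Real.log n - x)) (RR l s x) := by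
  unfold RR fker
  simp_rw [max_eq_left hs.le]
  simp_rw [← intervalIntegral.integral_const_mul]
  apply intervalIntegral.hasSum_integral_of_dominated_convergence
    (fun n _ => |Λ n - 1| * (n:ℝ)^(-s) * 2)
  · intro n
    apply Continuous.aestronglyMeasurable; fun_prop
  · intro n
    refine MeasureTheory.ae_of_all _ fun t ht => ?_
    rw [uIoc_of_le hl.le] at ht
    rw [norm_mul, norm_mul, norm_mul, Real.norm_eq_abs, Real.norm_eq_abs, Real.norm_eq_abs,
      Real.norm_eq_abs, abs_of_nonneg (Real.rpow_nonneg (Nat.cast_nonneg n) _)]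
    apply mul_le_mul_of_nonneg_left _ (by positivity)
    have h1 : t / l ≤ 1 := (div_le_one hl).2 ht.2
    have h2 : 0 ≤ t / l := div_nonneg ht.1.le hl.le
    rw [abs_of_nonneg (by linarith)]
    nlinarith [Real.abs_cos_le_one (t * (Real.log n - x)), abs_nonneg (Real.cos (t * (Real.log n - x)))]
  · exact MeasureTheory.ae_of_all _ fun t ht => (A2_summable s hs).mul_right 2
  · simp
  · refine MeasureTheory.ae_of_all _ fun t ht => ?_
    have e : (fun n : ℕ => (Λ n - 1) * (n:ℝ) ^ (-s) * (2 * (1 - t / l) * Real.cos (t * (Real.log n - x)))) = fun i : ℕ =>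
      2 * (1 - t / l) * ((Λ i - 1) * (i:ℝ) ^ (-s) * Real.cos (t * (Real.log i - x))) := by
      ext n; ring
    rw [e]
    exact (A2_hasSum s t x hs).mul_left (2 * (1 - t/l))

lemma GG_cont2 : Continuous (fun p : ℝ × ℝ => GG ((max p.1 1 : ℝ) + p.2 * Complex.I)) := by
  apply GG_cont.comp_continuous
  · fun_prop
  · intro p; simp

lemma RR_cont (l x : ℝ) : Continuous (fun s => RR l s x) := by
  unfold RR
  apply intervalIntegral.continuous_parametric_intervalIntegral_of_continuous'
  have := GG_cont2
  simp only [Function.uncurry_def]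
  have h2 : Continuous (fun p : ℝ × ℝ => (Complex.exp (Complex.I * p.2 * x) * GG ((max p.1 1:ℝ) + p.2 * Complex.I)).re) :=
    Complex.continuous_re.comp ((by fun_prop : Continuous (fun p : ℝ × ℝ => Complex.exp (Complex.I * p.2 * x))).mul this)
  exact (by fun_prop : Continuous (fun p : ℝ × ℝ => 2 * (1 - p.2 / l))).mul h2

lemma RR_tendsto (l : ℝ) (hl : 0 < l) : Tendsto (fun x => RR l 1 x) atTop (𝓝 0) := by
  set F : ℝ → ℂ := (Ioc 0 l).indicator fun t => ((2 * (1 - t / l) : ℝ) : ℂ) * GG ((max (1:ℝ) 1 : ℝ) + t * Complex.I) with hF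
  have h := Real.tendsto_integral_exp_smul_cocompact F
  have h1 : Tendsto (fun x : ℝ => -(x / (2 * Real.pi))) atTop (cocompact ℝ) := by
    have : Tendsto (fun x : ℝ => -(x / (2 * Real.pi))) atTop atBot :=
      tendsto_neg_atTop_atBot.comp (tendsto_id.atTop_div_const (by positivity))
    exact this.mono_right atBot_le_cocompact
  have h2 := (Complex.continuous_re.tendsto 0).comp (h.comp h1)
  simp only [Complex.zero_re] at h2
  refine h2.congr fun x => ?_
  simp only [Function.comp]
  have e1 : ∀ v : ℝ, Real.fourierChar (-(v * -(x / (2 * Real.pi)))) • F v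
     = (Ioc 0 l).indicator (fun t : ℝ => ((2 * (1 - t / l) : ℝ) : ℂ) * (Complex.exp (Complex.I * t * x) * GG ((max (1:ℝ) 1 : ℝ) + t * Complex.I))) v := by
    intro v
    by_cases hv : v ∈ Ioc 0 l
    · rw [hF, indicator_of_mem hv, indicator_of_mem hv, Circle.smul_def, Real.fourierChar_apply, smul_eq_mul]
      have : ((2 * Real.pi * -(v * -(x / (2 * Real.pi))) : ℝ) : ℂ) * Complex.I = Complex.I * v * x := by
        have hp : (Real.pi : ℂ) ≠ 0 := by exact_mod_cast Real.pi_ne_zero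
        push_cast; field_simp
      rw [this]; ring
    · rw [hF, indicator_of_notMem hv, indicator_of_notMem hv, smul_zero]
  simp_rw [e1]
  rw [MeasureTheory.integral_indicator measurableSet_Ioc, ← intervalIntegral.integral_of_le hl.le]
  unfold RR
  have hc : Continuous (fun t : ℝ => ((2 * (1 - t / l) : ℝ) : ℂ) * (Complex.exp (Complex.I * t * x) * GG ((max (1:ℝ) 1 : ℝ) + t * Complex.I))) := by
    have := GG_cont2.comp (by fun_prop : Continuous (fun t : ℝ => ((1:ℝ), t)))
    exact (by fun_prop : Continuous fun t : ℝ => ((2 * (1 - t / l) : ℝ) : ℂ)).mul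
      ((by fun_prop : Continuous fun t : ℝ => Complex.exp (Complex.I * t * x)).mul this)
  have := (Complex.reCLM.intervalIntegral_comp_comm (hc.intervalIntegrable (μ := MeasureTheory.volume) 0 l))
  simp only [Complex.reCLM_apply] at this
  rw [← this]
  simp only [Complex.re_ofReal_mul]



lemma A3_summ : Summable (fun m : ℤ => 1 / (1 + (m:ℝ)^2)) := by
  have h1 : Summable (fun m : ℤ => 1 / (m:ℝ)^2 + if m = 0 then 1 else 0) :=
    (Real.summable_one_div_int_pow.2 (by norm_num)).add
      (summable_of_hasFiniteSupport ((finite_singleton (0:ℤ)).subset (by intro m; simp)))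
  refine Summable.of_nonneg_of_le (fun m => by positivity) (fun m => ?_) h1
  by_cases hm : m = 0
  · simp [hm]
  · have : (m:ℝ) ≠ 0 := by exact_mod_cast hm
    simp only [hm, if_false, add_zero]
    gcongr; linarith

lemma A3_block (S : Finset ℕ) (s : ℝ) (hs : 1 < s) (k : ℕ) :
    ∑ n ∈ S with ⌊Real.log (n:ℕ)⌋₊ = k, Λ n * (n:ℝ)^(-s) ≤ (Real.log 4 + 4) * Real.exp 1 := by
  have h1 : ∑ n ∈ S with ⌊Real.log (n:ℕ)⌋₊ = k, Λ n * (n:ℝ)^(-s)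
      ≤ ∑ n ∈ Finset.Icc 0 ⌊Real.exp (k+1)⌋₊, Λ n * Real.exp (-k) := by
    have h0 : ∑ n ∈ S with ⌊Real.log (n:ℕ)⌋₊ = k, Λ n * (n:ℝ)^(-s) ≤ ∑ n ∈ S with ⌊Real.log (n:ℕ)⌋₊ = k, Λ n * Real.exp (-k) := by
      apply Finset.sum_le_sum
      intro n hn
      rw [Finset.mem_filter] at hn
      apply mul_le_mul_of_nonneg_left _ ArithmeticFunction.vonMangoldt_nonneg
      rcases Nat.eq_zero_or_pos n with rfl | hn0
      · simp [Real.zero_rpow (by linarith : -s ≠ 0)]; positivity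
      have hn' : (1:ℝ) ≤ n := by exact_mod_cast hn0
      rw [Real.rpow_def_of_pos (by linarith), Real.exp_le_exp]
      have hl := Real.log_nonneg hn'
      have : (k:ℝ) ≤ Real.log n := by rw [← hn.2]; exact Nat.floor_le hl
      nlinarith
    refine h0.trans (Finset.sum_le_sum_of_subset_of_nonneg ?_ ?_)
    · intro n hn
      rw [Finset.mem_filter] at hn
      rw [Finset.mem_Icc]
      refine ⟨Nat.zero_le _, ?_⟩
      rcases Nat.eq_zero_or_pos n with rfl | hn0
      · simp
      apply Nat.le_floor
      have h := Nat.lt_floor_add_one (Real.log n)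
      rw [hn.2] at h
      have hn' : (0:ℝ) < n := by exact_mod_cast hn0
      rw [← Real.exp_log hn', Real.exp_le_exp]; exact h.le
    · intros; exact mul_nonneg ArithmeticFunction.vonMangoldt_nonneg (Real.exp_pos _).le
  refine h1.trans ?_
  rw [← Finset.sum_mul, ← Chebyshev.psi_eq_sum_Icc]
  have h2 := Chebyshev.psi_le_const_mul_self (Real.exp_pos (k+1)).le
  calc _ ≤ (Real.log 4 + 4) * Real.exp (k+1) * Real.exp (-k) := by gcongr
    _ = _ := by rw [mul_assoc, ← Real.exp_add]; congr 2; ring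

lemma A3_tail : ∃ B : ℝ, 0 < B ∧ ∀ s x : ℝ, 1 < s → ∀ S : Finset ℕ,
    ∑ n ∈ S, Λ n * (n:ℝ)^(-s) / (1 + (Real.log n - x)^2) ≤ B := by
  set C := (Real.log 4 + 4) * Real.exp 1 with hC
  have hCpos : 0 < C := by have := Real.log_pos (by norm_num : (1:ℝ) < 4); positivity
  have hT : 0 ≤ ∑' m : ℤ, 1 / (1 + (m:ℝ)^2) := tsum_nonneg fun m => by positivity
  refine ⟨C * 3 * (∑' m : ℤ, 1 / (1 + (m:ℝ)^2)) + 1, by positivity, fun s x hs S => ?_⟩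
  set f : ℕ → ℕ := fun n => ⌊Real.log n⌋₊
  rw [← Finset.sum_fiberwise_of_maps_to (g := f) (t := S.image f) (fun n hn => Finset.mem_image_of_mem _ hn)]
  have h1 : ∀ k ∈ S.image f, ∑ n ∈ S with f n = k, Λ n * (n:ℝ)^(-s) / (1 + (Real.log n - x)^2)
     ≤ C * 3 * (1 / (1 + (((k:ℤ) - ⌊x⌋ : ℤ):ℝ)^2)) := by
    intro k _
    calc _ ≤ ∑ n ∈ S with f n = k, Λ n * (n:ℝ)^(-s) * (3 * (1 / (1 + (((k:ℤ) - ⌊x⌋ : ℤ):ℝ)^2))) := by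
          apply Finset.sum_le_sum
          intro n hn
          rw [Finset.mem_filter] at hn
          rw [div_eq_mul_inv]
          apply mul_le_mul_of_nonneg_left _ (mul_nonneg ArithmeticFunction.vonMangoldt_nonneg (by positivity))
          have hl : 0 ≤ Real.log n := Real.log_natCast_nonneg n
          have a1 : (k:ℝ) ≤ Real.log n := by rw [← hn.2]; exact Nat.floor_le hl
          have a2 : Real.log n < k + 1 := by rw [← hn.2]; exact Nat.lt_floor_add_one _
          have a3 := Int.floor_le x
          have a4 := Int.lt_floor_add_one x
          rw [mul_one_div, inv_eq_one_div, div_le_div_iff₀ (by positivity) (by positivity)]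
          push_cast
          set u := Real.log n - x with hu
          set m := (k:ℝ) - ⌊x⌋ with hm
          have b : |u - m| ≤ 1 := by rw [abs_le]; constructor <;> linarith
          rw [abs_le] at b
          nlinarith [sq_nonneg (2*u-m), sq_nonneg u, mul_nonneg (by linarith [b.1] : 0 ≤ 1 + (u-m)) (by linarith [b.2] : 0 ≤ 1 - (u-m))]
      _ = (∑ n ∈ S with f n = k, Λ n * (n:ℝ)^(-s)) * (3 * (1 / (1 + (((k:ℤ) - ⌊x⌋ : ℤ):ℝ)^2))) := by
          rw [Finset.sum_mul]
      _ ≤ C * (3 * (1 / (1 + (((k:ℤ) - ⌊x⌋ : ℤ):ℝ)^2))) := by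
          apply mul_le_mul_of_nonneg_right (A3_block S s hs k) (by positivity)
      _ = _ := by ring
  refine (Finset.sum_le_sum h1).trans ?_
  rw [← Finset.mul_sum]
  have h2 : ∑ k ∈ S.image f, (1 / (1 + (((k:ℤ) - ⌊x⌋ : ℤ):ℝ)^2)) ≤ ∑' m : ℤ, 1 / (1 + (m:ℝ)^2) := by
    have hinj : Function.Injective (fun k : ℕ => ((k:ℤ) - ⌊x⌋ : ℤ)) := by
      intro a b h; simpa using h
    have := A3_summ.sum_le_tsum ((S.image f).map ⟨_, hinj⟩) (fun m _ => by positivity)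
    rw [Finset.sum_map] at this
    exact this
  have : C * 3 * ∑ k ∈ S.image f, (1 / (1 + (((k:ℤ) - ⌊x⌋ : ℤ):ℝ)^2)) ≤ C * 3 * ∑' m : ℤ, 1 / (1 + (m:ℝ)^2) := by gcongr
  linarith



lemma A4_V (l x : ℝ) (hl : 1 ≤ l) (hx : l * Real.exp (-x) ≤ 1/4) :
    1/8 ≤ ∑ n ∈ Finset.Icc ⌈Real.exp x⌉₊ ⌊Real.exp (x+1/l)⌋₊, (n:ℝ)^(-1:ℝ) * (l/2) := by
  have hl0 : 0 < l := by linarith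
  have hcard : Real.exp (x+1/l) - Real.exp x - 1 ≤ ((Finset.Icc ⌈Real.exp x⌉₊ ⌊Real.exp (x+1/l)⌋₊).card : ℝ) := by
    rw [Nat.card_Icc]
    have h1 := Nat.ceil_lt_add_one (Real.exp_pos x).le
    have h2 := Nat.lt_floor_add_one (Real.exp (x+1/l))
    have h3 : ((⌊Real.exp (x+1/l)⌋₊ + 1 : ℕ):ℝ) - (⌈Real.exp x⌉₊:ℕ) ≤ ((⌊Real.exp (x+1/l)⌋₊ + 1 - ⌈Real.exp x⌉₊ : ℕ):ℝ) := by
      rw [sub_le_iff_le_add]; norm_cast; omega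
    push_cast at h3
    linarith
  have hterm : ∀ n ∈ Finset.Icc ⌈Real.exp x⌉₊ ⌊Real.exp (x+1/l)⌋₊, Real.exp (-(x+1/l)) * (l/2) ≤ (n:ℝ)^(-1:ℝ) * (l/2) := by
    intro n hn
    rw [Finset.mem_Icc] at hn
    have h1 : Real.exp x ≤ n := Nat.ceil_le.1 hn.1
    have h2 : (n:ℝ) ≤ Real.exp (x+1/l) := (Nat.le_floor_iff (Real.exp_pos _).le).1 hn.2
    have h3 : (0:ℝ) < n := (Real.exp_pos x).trans_le h1
    apply mul_le_mul_of_nonneg_right _ (by linarith)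
    rw [Real.exp_neg, Real.rpow_neg_one]
    gcongr
  have h := Finset.card_nsmul_le_sum _ _ _ hterm
  rw [nsmul_eq_mul] at h
  refine le_trans ?_ h
  have hE : 0 < Real.exp (-(x+1/l)) * (l/2) := by positivity
  refine le_trans ?_ (mul_le_mul_of_nonneg_right hcard hE.le)
  have e1 : Real.exp (x+1/l) * Real.exp (-(x+1/l)) = 1 := by rw [← Real.exp_add]; simp
  have e2 : Real.exp x * Real.exp (-(x+1/l)) = Real.exp (-(1/l)) := by rw [← Real.exp_add]; congr 1; ring
  have e3 : Real.exp (-(1/l)) ≤ 1 - 1/(2*l) := by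
    have h1 := Real.add_one_le_exp (1/l)
    have : Real.exp (-(1/l)) ≤ (1/l+1)⁻¹ := by
      rw [Real.exp_neg]; gcongr
    refine this.trans ?_
    have h2 : (1/l+1)⁻¹ = l/(1+l) := by field_simp
    rw [h2, div_le_iff₀ (by linarith)]
    field_simp; nlinarith
  have e4 : Real.exp (-(x+1/l)) ≤ Real.exp (-x) := by
    rw [Real.exp_le_exp]; have : 0 < 1/l := by positivity
    linarith
  have e5 : (Real.exp (x+1/l) - Real.exp x - 1) * (Real.exp (-(x+1/l)) * (l/2))
     = (1 - Real.exp (-(1/l)) - Real.exp (-(x+1/l))) * (l/2) := by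
    linear_combination (l/2)*e1 - (l/2)*e2
  rw [e5]
  have e6 : (1/(2*l)) * l = 1/2 := by field_simp
  nlinarith

lemma A4_key (l s x δ B : ℝ) (hl : 1 ≤ l) (hs : 1 < s) (hδ : 0 < δ)
    (hB : ∀ S : Finset ℕ, ∑ n ∈ S, Λ n * (n:ℝ)^(-s) / (1 + (Real.log n - x)^2) ≤ B) :
    ∑ n ∈ Finset.Icc ⌈Real.exp x⌉₊ ⌊Real.exp (x+1/l)⌋₊, (n:ℝ)^(-s) * (l/2) + RR l s x ≤
     l * ∑ n ∈ Finset.Icc ⌈Real.exp (x-δ)⌉₊ ⌊Real.exp (x+δ)⌋₊, Λ n / n + 4/l * (1+1/δ^2) * B := by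
  have hl0 : 0 < l := by linarith
  have hmain := A2_main l s x hl0 hs
  have hrp : ∀ n : ℕ, 0 ≤ (n:ℝ)^(-s) := fun n => by positivity
  have hf2 : Summable (fun n : ℕ => (n:ℝ)^(-s) * fker l (Real.log n - x)) := by
    refine Summable.of_nonneg_of_le (fun n => mul_nonneg (hrp n) (fker_nonneg hl0))
      (fun n => mul_le_mul_of_nonneg_left (fker_le hl0) (hrp n)) ?_
    exact (Real.summable_nat_rpow.2 (by linarith)).mul_right l
  have hf1 := hmain.add hf2.hasSum
  have e : (fun n : ℕ => (Λ n - 1) * (n:ℝ)^(-s) * fker l (Real.log n - x) + (n:ℝ)^(-s) * fker l (Real.log n - x))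
    = fun n : ℕ => Λ n * (n:ℝ)^(-s) * fker l (Real.log n - x) := by ext n; ring
  rw [e] at hf1
  have hlow : ∑ n ∈ Finset.Icc ⌈Real.exp x⌉₊ ⌊Real.exp (x+1/l)⌋₊, (n:ℝ)^(-s) * (l/2) ≤
      ∑' n : ℕ, (n:ℝ)^(-s) * fker l (Real.log n - x) := by
    refine le_trans (Finset.sum_le_sum ?_) (hf2.sum_le_tsum _ (fun n _ => mul_nonneg (hrp n) (fker_nonneg hl0)))
    intro n hn
    rw [Finset.mem_Icc] at hn
    have h1 : Real.exp x ≤ n := Nat.ceil_le.1 hn.1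
    have h2 : (n:ℝ) ≤ Real.exp (x+1/l) := (Nat.le_floor_iff (Real.exp_pos _).le).1 hn.2
    have h3 : (0:ℝ) < n := (Real.exp_pos x).trans_le h1
    apply mul_le_mul_of_nonneg_left _ (hrp n)
    apply fker_ge hl0
    have h4 : x ≤ Real.log n := (Real.le_log_iff_exp_le h3).2 h1
    have h5 : Real.log n ≤ x + 1/l := (Real.log_le_iff_le_exp h3).2 h2
    rw [abs_of_nonneg (by linarith)]
    calc l * (Real.log n - x) ≤ l * (1/l) := by gcongr; linarith
      _ = 1 := by field_simp
  have hup : RR l s x + ∑' n : ℕ, (n:ℝ)^(-s) * fker l (Real.log n - x) ≤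
      l * ∑ n ∈ Finset.Icc ⌈Real.exp (x-δ)⌉₊ ⌊Real.exp (x+δ)⌋₊, Λ n / n + 4/l * (1+1/δ^2) * B := by
    refine hasSum_le_of_sum_le hf1 fun S => ?_
    rw [← Finset.sum_filter_add_sum_filter_not S (fun n : ℕ => n ∈ Finset.Icc ⌈Real.exp (x-δ)⌉₊ ⌊Real.exp (x+δ)⌋₊)]
    have hΛ : ∀ n, 0 ≤ Λ n := fun n => ArithmeticFunction.vonMangoldt_nonneg
    apply add_le_add
    · rw [Finset.mul_sum]
      calc _ ≤ ∑ n ∈ S with n ∈ Finset.Icc ⌈Real.exp (x-δ)⌉₊ ⌊Real.exp (x+δ)⌋₊, l * (Λ n / n) := by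
            apply Finset.sum_le_sum
            intro n hn
            rw [Finset.mem_filter, Finset.mem_Icc] at hn
            have h1 : Real.exp (x-δ) ≤ n := Nat.ceil_le.1 hn.2.1
            have h3 : (0:ℝ) < n := (Real.exp_pos _).trans_le h1
            have h4 : (1:ℝ) ≤ n := by exact_mod_cast (by exact_mod_cast h3 : 0 < n)
            have h5 : (n:ℝ)^(-s) ≤ (n:ℝ)⁻¹ := by
              rw [← Real.rpow_neg_one]
              exact Real.rpow_le_rpow_of_exponent_le h4 (by linarith)
            rw [div_eq_mul_inv, mul_comm l]
            exact mul_le_mul (mul_le_mul_of_nonneg_left h5 (hΛ n)) (fker_le hl0) (fker_nonneg hl0)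
              (mul_nonneg (hΛ n) (by positivity))
        _ ≤ _ := by
            apply Finset.sum_le_sum_of_subset_of_nonneg
            · intro n hn; exact (Finset.mem_filter.1 hn).2
            · intro n _ _
              have := hΛ n
              positivity
    · refine le_trans ?_ (mul_le_mul_of_nonneg_left
        (hB (S.filter (fun n : ℕ => ¬ n ∈ Finset.Icc ⌈Real.exp (x-δ)⌉₊ ⌊Real.exp (x+δ)⌋₊))) (by positivity))
      rw [Finset.mul_sum]
      apply Finset.sum_le_sum
      intro n hn
      rw [Finset.mem_filter, Finset.mem_Icc] at hn
      rcases Nat.eq_zero_or_pos n with rfl | hn0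
      · simp
      have h3 : (0:ℝ) < n := by exact_mod_cast hn0
      have hfar : δ^2 ≤ (Real.log n - x)^2 := by
        by_contra hcon
        push Not at hcon
        have := abs_lt_of_sq_lt_sq hcon hδ.le
        rw [abs_lt] at this
        apply hn.2
        constructor
        · apply Nat.ceil_le.2
          rw [← Real.exp_log h3, Real.exp_le_exp]; linarith
        · apply Nat.le_floor
          rw [← Real.exp_log h3, Real.exp_le_exp]; linarith
      set u := Real.log n - x
      have hu2 : 0 < u^2 := lt_of_lt_of_le (by positivity) hfar
      have hu : u ≠ 0 := by intro h; rw [h] at hu2; simp at hu2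
      have hk := fker_le' hl0 hu
      have hk2 : fker l u ≤ 4/l * (1+1/δ^2) / (1+u^2) := by
        refine hk.trans ?_
        have e1 : 4 / (l * u^2) = 4/l * (1/u^2) := by field_simp
        rw [e1, mul_div_assoc]
        apply mul_le_mul_of_nonneg_left _ (by positivity)
        rw [div_le_div_iff₀ hu2 (by positivity)]
        have : 1 ≤ 1/δ^2 * u^2 := by
          rw [one_div, inv_mul_eq_div, le_div_iff₀ (by positivity)]; linarith
        linarith
      calc _ ≤ Λ n * (n:ℝ)^(-s) * (4/l * (1+1/δ^2) / (1+u^2)) :=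
            mul_le_mul_of_nonneg_left hk2 (mul_nonneg (hΛ n) (hrp n))
        _ = _ := by ring
  linarith

lemma A4_mass (δ : ℝ) (hδ : 0 < δ) : ∃ c > 0, ∀ᶠ x in atTop,
    c ≤ ∑ n ∈ Finset.Icc ⌈Real.exp (x-δ)⌉₊ ⌊Real.exp (x+δ)⌋₊, Λ n / n := by
  obtain ⟨B, hB0, hB⟩ := A3_tail
  set l := max 1 (4 * (1+1/δ^2) * B * 32) with hldef
  have hl : 1 ≤ l := le_max_left _ _
  have hl0 : 0 < l := by linarith
  have hT : 4/l * (1+1/δ^2) * B ≤ 1/32 := by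
    have : 4 * (1+1/δ^2) * B * 32 ≤ l := le_max_right _ _
    have e : 4/l * (1+1/δ^2) * B = (4 * (1+1/δ^2) * B) / l := by ring
    rw [e, div_le_iff₀ hl0]; linarith
  refine ⟨1/(16*l), by positivity, ?_⟩
  have hR := (RR_tendsto l hl0).eventually (lt_mem_nhds (by norm_num : (-1/32:ℝ) < 0))
  have hx2 : ∀ᶠ x : ℝ in atTop, l * Real.exp (-x) ≤ 1/4 := by
    have : Tendsto (fun x : ℝ => l * Real.exp (-x)) atTop (𝓝 (l * 0)) :=
      (Real.tendsto_exp_neg_atTop_nhds_zero).const_mul l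
    rw [mul_zero] at this
    exact (this.eventually (gt_mem_nhds (by norm_num : (0:ℝ) < 1/4))).mono fun x hx => hx.le
  filter_upwards [hR, hx2] with x h1 h2
  have hV := A4_V l x hl h2
  have hlim : Tendsto (fun s : ℝ => ∑ n ∈ Finset.Icc ⌈Real.exp x⌉₊ ⌊Real.exp (x+1/l)⌋₊, (n:ℝ)^(-s) * (l/2) + RR l s x)
      (𝓝[>] 1) (𝓝 (∑ n ∈ Finset.Icc ⌈Real.exp x⌉₊ ⌊Real.exp (x+1/l)⌋₊, (n:ℝ)^(-1:ℝ) * (l/2) + RR l 1 x)) := by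
    apply tendsto_nhdsWithin_of_tendsto_nhds
    apply Tendsto.add
    · apply tendsto_finsetSum
      intro n hn
      rw [Finset.mem_Icc] at hn
      have h1 : Real.exp x ≤ n := Nat.ceil_le.1 hn.1
      have h3 : (0:ℝ) < n := (Real.exp_pos x).trans_le h1
      apply Tendsto.mul_const
      have : Continuous (fun s : ℝ => (n:ℝ)^(-s)) := by
        apply Continuous.rpow continuous_const continuous_neg
        intro s; left; exact h3.ne'
      exact this.tendsto 1
    · exact (RR_cont l x).tendsto 1
  have hle := le_of_tendsto hlim (by
    filter_upwards [self_mem_nhdsWithin] with s hs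
    exact A4_key l s x δ B hl hs hδ (hB s x hs))
  have : 1/16 ≤ l * ∑ n ∈ Finset.Icc ⌈Real.exp (x-δ)⌉₊ ⌊Real.exp (x+δ)⌋₊, Λ n / n := by linarith
  rw [div_le_iff₀ (by positivity)]; nlinarith

theorem thmA (δ : ℝ) (hδ : 0 < δ) : ∃ c > 0, ∀ᶠ x in atTop,
    c * Real.exp x / x ≤ (((Finset.Icc ⌈Real.exp (x-δ)⌉₊ ⌊Real.exp (x+δ)⌋₊).filter IsPrimePow).card : ℝ) := by
  obtain ⟨c, hc, h⟩ := A4_mass δ hδ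
  refine ⟨c * Real.exp (-δ) / 2, by positivity, ?_⟩
  filter_upwards [h, eventually_gt_atTop δ] with x hx hxδ
  have hx0 : 0 < x := by linarith
  have h1 : ∑ n ∈ Finset.Icc ⌈Real.exp (x-δ)⌉₊ ⌊Real.exp (x+δ)⌋₊, Λ n / n ≤
     ∑ n ∈ (Finset.Icc ⌈Real.exp (x-δ)⌉₊ ⌊Real.exp (x+δ)⌋₊).filter IsPrimePow, (2*x) * Real.exp (-(x-δ)) := by
    rw [Finset.sum_filter]
    apply Finset.sum_le_sum
    intro n hn
    rw [Finset.mem_Icc] at hn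
    have h1 : Real.exp (x-δ) ≤ n := Nat.ceil_le.1 hn.1
    have h2 : (n:ℝ) ≤ Real.exp (x+δ) := (Nat.le_floor_iff (Real.exp_pos _).le).1 hn.2
    have h3 : (0:ℝ) < n := (Real.exp_pos _).trans_le h1
    split_ifs with hp
    · rw [div_eq_mul_inv]
      apply mul_le_mul
      · refine ArithmeticFunction.vonMangoldt_le_log.trans ?_
        have := (Real.log_le_iff_le_exp h3).2 h2
        linarith
      · rw [Real.exp_neg]; gcongr
      · positivity
      · positivity
    · rw [ArithmeticFunction.vonMangoldt_eq_zero_iff.2 hp]; simp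
  rw [Finset.sum_const, nsmul_eq_mul] at h1
  have h2 := hx.trans h1
  set K := (((Finset.Icc ⌈Real.exp (x-δ)⌉₊ ⌊Real.exp (x+δ)⌋₊).filter IsPrimePow).card : ℝ)
  rw [div_le_iff₀ hx0]
  have e : Real.exp (-(x-δ)) * (Real.exp (-δ) * Real.exp x) = 1 := by
    rw [← Real.exp_add, ← Real.exp_add]; simp
  calc c * Real.exp (-δ) / 2 * Real.exp x = c * (Real.exp (-δ) * Real.exp x) / 2 := by ring
    _ ≤ (K * (2 * x * Real.exp (-(x-δ)))) * (Real.exp (-δ) * Real.exp x) / 2 := by gcongr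
    _ = K * x * (Real.exp (-(x-δ)) * (Real.exp (-δ) * Real.exp x)) := by ring
    _ = K * x := by rw [e, mul_one]


lemma B1_bonf (S : Finset ℕ) (k : ℕ) :
    (if S = ∅ then 1 else 0 : ℝ) ≤ ∑ T ∈ S.powerset with T.card ≤ 2*k, (-1:ℝ)^T.card := by
  have hgen : ∀ S : Finset ℕ, ∀ m : ℕ, ∑ T ∈ S.powerset with T.card ≤ m, (-1:ℝ)^T.card =
      ∑ j ∈ Finset.range (m+1), (S.card.choose j : ℝ) * (-1)^j := by
    intro S m
    rw [← Finset.sum_fiberwise_of_maps_to (g := Finset.card) (t := Finset.range (m+1))]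
    · apply Finset.sum_congr rfl
      intro j hj
      rw [Finset.mem_range] at hj
      have : ((S.powerset.filter (fun T => T.card ≤ m)).filter (fun T => T.card = j)) = S.powersetCard j := by
        ext T; simp only [Finset.mem_filter, Finset.mem_powerset, Finset.mem_powersetCard]
        constructor
        · rintro ⟨⟨a, _⟩, b⟩; exact ⟨a, b⟩
        · rintro ⟨a, b⟩; exact ⟨⟨a, by omega⟩, b⟩
      rw [this, Finset.sum_congr rfl (g := fun _ => (-1:ℝ)^j)]
      · rw [Finset.sum_const, Finset.card_powersetCard, nsmul_eq_mul]
      · intro T hT; rw [(Finset.mem_powersetCard.1 hT).2]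
    · intro T hT
      rw [Finset.mem_filter] at hT
      exact Finset.mem_range.2 (by omega)
  rw [hgen]
  split_ifs with h
  · subst h
    rw [Finset.sum_eq_single 0]
    · simp
    · intro j _ hj
      simp [Nat.choose_eq_zero_of_lt (Nat.pos_of_ne_zero hj)]
    · simp
  · obtain ⟨m, hm⟩ : ∃ m, S.card = m + 1 := ⟨S.card - 1, by have := Finset.card_pos.2 (Finset.nonempty_iff_ne_empty.2 h); omega⟩
    rw [hm]
    have key : ∀ r : ℕ, ∑ j ∈ Finset.range (r+1), ((m+1).choose j : ℝ) * (-1)^j = (-1)^r * (m.choose r : ℝ) := by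
      intro r
      induction r with
      | zero => simp
      | succ r ih =>
        rw [Finset.sum_range_succ, ih, Nat.choose_succ_succ]; push_cast; ring
    rw [key]
    rw [pow_mul]; simp

lemma B1_class (N d r : ℕ) (hd : 0 < d) :
    |(((Finset.range N).filter (fun n => n ≡ r [MOD d])).card : ℝ) - N / d| ≤ 1 := by
  rw [← Nat.count_eq_card_filter_range, Nat.count_modEq_card _ hd]
  have hd' : (0:ℝ) < d := by exact_mod_cast hd
  have h1 : (N:ℝ) / d - 1 < ((N / d : ℕ) : ℝ) := by
    rw [sub_lt_iff_lt_add, div_lt_iff₀ hd']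
    have := Nat.lt_mul_div_succ N hd
    have h : (N:ℝ) < (d:ℝ) * ((N/d : ℕ) + 1) := by exact_mod_cast this
    linarith
  have h2 : ((N / d : ℕ) : ℝ) ≤ (N:ℝ) / d := Nat.cast_div_le
  push_cast
  rw [abs_le]
  split_ifs <;> constructor <;> linarith

lemma B1_crt (T U : Finset ℕ) (h : ℕ) (hT : ∀ p ∈ T, p.Prime) (hh : ∀ p ∈ T, ¬ p ∣ h) (hU : U ⊆ T) :
    ∃ r : ℕ, ∀ n : ℕ, ((∀ p ∈ T, p ∣ n * (n + h)) ∧ T.filter (fun p => p ∣ n) = U) ↔ n ≡ r [MOD ∏ p ∈ T, p] := by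
  have hcop : Nat.Coprime (∏ p ∈ U, p) (∏ p ∈ T \ U, p) := by
    apply Nat.Coprime.prod_left; intro p hp
    apply Nat.Coprime.prod_right; intro q hq
    rw [Finset.mem_sdiff] at hq
    exact (Nat.coprime_primes (hT p (hU hp)) (hT q hq.1)).2 (by rintro rfl; exact hq.2 hp)
  set M := ∏ p ∈ T \ U, p with hM
  have hM0 : 0 < M := Finset.prod_pos fun p hp => (hT p (Finset.mem_sdiff.1 hp).1).pos
  obtain ⟨r, hr1, hr2⟩ := Nat.chineseRemainder hcop 0 (h * (M - 1))
  have hrU : ∀ p ∈ U, p ∣ r := fun p hp =>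
    (Finset.dvd_prod_of_mem (fun p => p) hp).trans (Nat.modEq_zero_iff_dvd.1 hr1)
  have hrU' : ∀ p ∈ T \ U, p ∣ r + h := fun p hp => by
    refine (Finset.dvd_prod_of_mem (fun p => p) hp).trans (Nat.modEq_zero_iff_dvd.1 ((hr2.add_right h).trans ?_))
    have : h * (M-1) + h = h * M := by
      obtain ⟨m, hm⟩ : ∃ m, M = m + 1 := ⟨M-1, by omega⟩
      rw [hm]; simp; ring
    rw [this]; exact Nat.modEq_zero_iff_dvd.2 (dvd_mul_left _ _)
  refine ⟨r, fun n => ?_⟩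
  constructor
  · rintro ⟨h1, h2⟩
    rw [Nat.modEq_iff_dvd]
    push_cast
    apply Finset.prod_dvd_of_coprime
    · intro p hp q hq hpq
      exact Nat.isCoprime_iff_coprime.2 ((Nat.coprime_primes (hT p hp) (hT q hq)).2 hpq)
    · intro p hp
      by_cases hpU : p ∈ U
      · have a : p ∣ n := by rw [← h2] at hpU; exact (Finset.mem_filter.1 hpU).2
        exact dvd_sub (by exact_mod_cast hrU p hpU) (by exact_mod_cast a)
      · have a : ¬ p ∣ n := fun hh => hpU (by rw [← h2]; exact Finset.mem_filter.2 ⟨hp, hh⟩)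
        have b : p ∣ n + h := ((hT p hp).dvd_mul.1 (h1 p hp)).resolve_left a
        have c := hrU' p (Finset.mem_sdiff.2 ⟨hp, hpU⟩)
        have : ((r:ℤ) - n) = ((r + h : ℕ):ℤ) - ((n + h : ℕ) : ℤ) := by push_cast; ring
        rw [this]
        exact dvd_sub (by exact_mod_cast c) (by exact_mod_cast b)
  · intro hn
    have hnp : ∀ p ∈ T, n ≡ r [MOD p] := fun p hp => hn.of_dvd (Finset.dvd_prod_of_mem (fun p => p) hp)
    constructor
    · intro p hp
      by_cases hpU : p ∈ U
      · exact Dvd.dvd.mul_right (((hnp p hp).dvd_iff dvd_rfl).2 (hrU p hpU)) _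
      · exact Dvd.dvd.mul_left ((((hnp p hp).add_right h).dvd_iff dvd_rfl).2 (hrU' p (Finset.mem_sdiff.2 ⟨hp, hpU⟩))) _
    · ext p
      rw [Finset.mem_filter]
      constructor
      · rintro ⟨hp, hpn⟩
        by_contra hpU
        have a : p ∣ r := ((hnp p hp).dvd_iff dvd_rfl).1 hpn
        have b := hrU' p (Finset.mem_sdiff.2 ⟨hp, hpU⟩)
        exact hh p hp ((Nat.dvd_add_right a).1 b)
      · intro hpU
        exact ⟨hU hpU, ((hnp p (hU hpU)).dvd_iff dvd_rfl).2 (hrU p hpU)⟩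

lemma B1_count (N h : ℕ) (T : Finset ℕ) (hT : ∀ p ∈ T, p.Prime) (hh : ∀ p ∈ T, ¬ p ∣ h) :
    |(((Finset.range N).filter (fun n => ∀ p ∈ T, p ∣ n * (n+h))).card : ℝ) - N * ∏ p ∈ T, (2 / (p:ℝ))| ≤ 2^T.card := by
  have hd : 0 < ∏ p ∈ T, p := Finset.prod_pos fun p hp => (hT p hp).pos
  rw [Finset.card_eq_sum_card_fiberwise (f := fun n => T.filter (fun p => p ∣ n)) (t := T.powerset)
    (fun n _ => Finset.mem_coe.2 (Finset.mem_powerset.2 (Finset.filter_subset _ _)))]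
  have e : (N:ℝ) * ∏ p ∈ T, (2 / (p:ℝ)) = ∑ U ∈ T.powerset, (N:ℝ) / ((∏ p ∈ T, p : ℕ):ℝ) := by
    rw [Finset.sum_const, Finset.card_powerset, Finset.prod_div_distrib, Finset.prod_const, nsmul_eq_mul]
    push_cast; ring
  rw [e]; push_cast
  rw [← Finset.sum_sub_distrib]
  refine (Finset.abs_sum_le_sum_abs _ _).trans ?_
  refine (Finset.sum_le_card_nsmul _ _ 1 ?_).trans (by simp [Finset.card_powerset])
  intro U hU
  obtain ⟨r, hr⟩ := B1_crt T U h hT hh (Finset.mem_powerset.1 hU)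
  rw [Finset.filter_filter]
  simp_rw [hr]
  have := B1_class N _ r hd
  rw [Nat.cast_prod] at this
  exact this


lemma B2_sieve (N h k : ℕ) (P : Finset ℕ) (hP : ∀ p ∈ P, p.Prime) (hh : ∀ p ∈ P, ¬ p ∣ h)
    (Y : ℝ) (hY : 1 ≤ Y) (hPY : 2 * (P.card : ℝ) ≤ Y) :
    (((Finset.range N).filter (fun n => ∀ p ∈ P, ¬ p ∣ n * (n+h))).card : ℝ) ≤
      N * (Real.exp (-(2 * ∑ p ∈ P, 1/(p:ℝ))) + Real.exp (2 * Real.exp 1 * (∑ p ∈ P, 1/(p:ℝ)) - 2*k))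
       + Real.exp 1 * Y^(2*k) := by
  set Q := P.powerset.filter (fun T => T.card ≤ 2*k) with hQ
  have step1 : (((Finset.range N).filter (fun n => ∀ p ∈ P, ¬ p ∣ n * (n+h))).card : ℝ) ≤
      ∑ T ∈ Q, (-1:ℝ)^T.card * (((Finset.range N).filter (fun n => ∀ p ∈ T, p ∣ n * (n+h))).card : ℝ) := by
    have a : (((Finset.range N).filter (fun n => ∀ p ∈ P, ¬ p ∣ n * (n+h))).card : ℝ)
       = ∑ n ∈ Finset.range N, (if P.filter (fun p => p ∣ n*(n+h)) = ∅ then 1 else 0 : ℝ) := by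
      rw [← Finset.sum_filter, Finset.sum_const, nsmul_eq_mul, mul_one]
      simp only [Finset.filter_eq_empty_iff]
    rw [a]
    refine (Finset.sum_le_sum fun n _ => B1_bonf _ k).trans ?_
    have b : ∀ n : ℕ, ∑ T ∈ (P.filter (fun p => p ∣ n*(n+h))).powerset with T.card ≤ 2*k, (-1:ℝ)^T.card
       = ∑ T ∈ Q, if (∀ p ∈ T, p ∣ n*(n+h)) then (-1:ℝ)^T.card else 0 := by
      intro n
      rw [← Finset.sum_filter]
      apply Finset.sum_congr _ (fun _ _ => rfl)
      ext T
      simp only [hQ, Finset.mem_filter, Finset.mem_powerset]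
      constructor
      · rintro ⟨h1, h2⟩
        exact ⟨⟨h1.trans (Finset.filter_subset _ _), h2⟩, fun p hp => (Finset.mem_filter.1 (h1 hp)).2⟩
      · rintro ⟨⟨h1, h2⟩, h3⟩
        exact ⟨fun p hp => Finset.mem_filter.2 ⟨h1 hp, h3 p hp⟩, h2⟩
    simp_rw [b]
    rw [Finset.sum_comm]
    apply le_of_eq
    apply Finset.sum_congr rfl
    intro T _
    rw [← Finset.sum_filter, Finset.sum_const, nsmul_eq_mul, mul_comm]
  have hQP : ∀ T ∈ Q, T ⊆ P := fun T hT => Finset.mem_powerset.1 (Finset.mem_filter.1 hT).1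
  have step2 : ∑ T ∈ Q, (-1:ℝ)^T.card * (((Finset.range N).filter (fun n => ∀ p ∈ T, p ∣ n * (n+h))).card : ℝ)
      ≤ N * ∑ T ∈ Q, ∏ p ∈ T, (-(2/(p:ℝ))) + ∑ T ∈ Q, (2:ℝ)^T.card := by
    rw [Finset.mul_sum, ← Finset.sum_add_distrib]
    apply Finset.sum_le_sum
    intro T hT
    have hc := B1_count N h T (fun p hp => hP p (hQP T hT hp)) (fun p hp => hh p (hQP T hT hp))
    rw [Finset.prod_neg]
    rw [abs_le] at hc
    rcases neg_one_pow_eq_or ℝ T.card with e | e <;> rw [e] <;> linarith [hc.1, hc.2]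
  have hpos : ∀ T : Finset ℕ, 0 ≤ ∏ p ∈ T, (2/(p:ℝ)) := fun T => Finset.prod_nonneg fun p _ => by positivity
  have step3 : ∑ T ∈ Q, ∏ p ∈ T, (-(2/(p:ℝ))) ≤
      Real.exp (-(2 * ∑ p ∈ P, 1/(p:ℝ))) + Real.exp (2 * Real.exp 1 * (∑ p ∈ P, 1/(p:ℝ)) - 2*k) := by
    have a := Finset.sum_filter_add_sum_filter_not P.powerset (fun T => T.card ≤ 2*k) (fun T => ∏ p ∈ T, (-(2/(p:ℝ))))
    rw [← Finset.prod_one_add] at a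
    have b : ∏ p ∈ P, (1 + -(2/(p:ℝ))) ≤ Real.exp (-(2 * ∑ p ∈ P, 1/(p:ℝ))) := by
      rw [Finset.mul_sum, ← Finset.sum_neg_distrib, Real.exp_sum]
      apply Finset.prod_le_prod
      · intro p hp
        have : (2:ℝ) ≤ p := by exact_mod_cast (hP p hp).two_le
        have : 2/(p:ℝ) ≤ 1 := (div_le_one (by linarith)).2 this
        linarith
      · intro p hp
        have := Real.add_one_le_exp (-(2 * (1/(p:ℝ))))
        have e : 2 * (1/(p:ℝ)) = 2/p := by ring
        rw [e] at this ⊢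
        linarith
    have c : - ∑ T ∈ P.powerset with ¬ T.card ≤ 2*k, ∏ p ∈ T, (-(2/(p:ℝ))) ≤ Real.exp (2 * Real.exp 1 * (∑ p ∈ P, 1/(p:ℝ)) - 2*k) := by
      have c1 : ∀ T ∈ P.powerset.filter (fun T => ¬ T.card ≤ 2*k), - ∏ p ∈ T, (-(2/(p:ℝ))) ≤ Real.exp (-(2*k)) * ∏ p ∈ T, (2 * Real.exp 1/(p:ℝ)) := by
        intro T hT
        have hT2 := (Finset.mem_filter.1 hT).2
        have e : ∏ p ∈ T, (2 * Real.exp 1/(p:ℝ)) = Real.exp T.card * ∏ p ∈ T, (2/(p:ℝ)) := by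
          rw [← Real.exp_one_pow, ← Finset.prod_const, ← Finset.prod_mul_distrib]
          apply Finset.prod_congr rfl; intros; ring
        rw [e, ← mul_assoc, ← Real.exp_add, Finset.prod_neg]
        have f : 1 ≤ Real.exp (-(2*k) + T.card) := by
          apply Real.one_le_exp
          have : (2*k:ℝ) ≤ T.card := by exact_mod_cast (by omega : 2*k ≤ T.card)
          linarith
        have := hpos T
        rcases neg_one_pow_eq_or ℝ T.card with e | e <;> rw [e] <;> nlinarith
      rw [← Finset.sum_neg_distrib]
      refine (Finset.sum_le_sum c1).trans ?_
      refine (Finset.sum_le_sum_of_subset_of_nonneg (Finset.filter_subset _ _) (fun T _ _ => by positivity)).trans ?_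
      rw [← Finset.mul_sum, ← Finset.prod_one_add]
      have := Real.prod_one_add_le_exp_sum P (f := fun p : ℕ => 2 * Real.exp 1/(p:ℝ)) (fun i => by positivity)
      calc _ ≤ Real.exp (-(2*k)) * Real.exp (∑ p ∈ P, 2 * Real.exp 1/(p:ℝ)) := by gcongr
        _ = _ := by
          rw [← Real.exp_add, Finset.mul_sum]; congr 1
          have : ∑ p ∈ P, 2 * Real.exp 1/(p:ℝ) = ∑ p ∈ P, 2 * Real.exp 1*(1/(p:ℝ)) :=
            Finset.sum_congr rfl (fun _ _ => by ring)
          rw [this]; ring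
    linarith
  have step4 : ∑ T ∈ Q, (2:ℝ)^T.card ≤ Real.exp 1 * Y^(2*k) := by
    have hY0 : 0 < Y := by linarith
    have c1 : ∀ T ∈ Q, (2:ℝ)^T.card ≤ Y^(2*k) * ∏ p ∈ T, (2/Y) := by
      intro T hT
      have hT2 := (Finset.mem_filter.1 hT).2
      rw [Finset.prod_const, div_pow, mul_div_assoc', le_div_iff₀ (by positivity), mul_comm]
      exact mul_le_mul_of_nonneg_right (pow_le_pow_right₀ hY hT2) (by positivity)
    refine (Finset.sum_le_sum c1).trans ?_
    refine (Finset.sum_le_sum_of_subset_of_nonneg (Finset.filter_subset _ _) (fun T _ _ => by positivity)).trans ?_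
    rw [← Finset.mul_sum, ← Finset.prod_one_add, mul_comm]
    apply mul_le_mul_of_nonneg_right _ (by positivity)
    refine (Real.prod_one_add_le_exp_sum P (f := fun _ : ℕ => 2/Y) (fun i => by positivity)).trans ?_
    rw [Real.exp_le_exp, Finset.sum_const, nsmul_eq_mul, mul_div_assoc', div_le_one hY0]; linarith
  have := mul_le_mul_of_nonneg_left step3 (Nat.cast_nonneg N : (0:ℝ) ≤ N)
  linarith


lemma B3_prod (M : ℕ) (hM : 2 ≤ M) : Real.log M ≤ ∏ p ∈ M.primesBelow, (1 - 1/(p:ℝ))⁻¹ := by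
  let f : ℕ →* ℝ := { toFun := fun n => (n:ℝ)⁻¹, map_one' := by simp, map_mul' := by intro a b; simp [mul_comm] }
  have hf : ∀ n, f n = (n:ℝ)⁻¹ := fun n => rfl
  obtain ⟨h1, h2⟩ := EulerProduct.summable_and_hasSum_smoothNumbers_prod_primesBelow_geometric (f := f)
    (by intro p hp; rw [hf, norm_inv]; apply inv_lt_one_of_one_lt₀; simpa using hp.one_lt) M
  have h3 := (hasSum_subtype_iff_indicator.1 h2 : HasSum _ _)
  have h4 := sum_le_hasSum (Finset.Icc 1 (M-1)) (fun i _ => by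
    apply Set.indicator_nonneg; intro x _; rw [hf]; positivity) h3
  have h5 := log_add_one_le_harmonic (M-1)
  have h6 : (((M-1:ℕ):ℝ) + 1) = M := by
    have : M - 1 + 1 = M := by omega
    exact_mod_cast this
  push_cast at h5
  rw [h6] at h5
  refine h5.trans ?_
  have h7 : ∏ p ∈ M.primesBelow, (1 - 1/(p:ℝ))⁻¹ = ∏ p ∈ M.primesBelow, (1 - f p)⁻¹ := by
    simp [hf]
  rw [h7]
  refine le_trans (le_of_eq ?_) h4
  rw [harmonic_eq_sum_Icc]
  push_cast
  apply Finset.sum_congr rfl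
  intro i hi
  rw [Finset.mem_Icc] at hi
  rw [Set.indicator_of_mem, hf]
  exact Nat.mem_smoothNumbers_of_lt (by omega) (by omega)

lemma B3_mertens (h : ℕ) (hh : 0 < h) : ∃ C : ℝ, ∀ M : ℕ, 2 ≤ M →
    Real.log (Real.log M) - C ≤ ∑ p ∈ M.primesBelow with ¬ p ∣ h, 1/(p:ℝ) := by
  have hs : Summable (fun n:ℕ => 2 * (1/(n:ℝ)^2)) := (Real.summable_one_div_nat_pow.2 one_lt_two).mul_left 2
  refine ⟨∑' n:ℕ, 2 * (1/(n:ℝ)^2) + ∑ p ∈ h.divisors, 1/(p:ℝ), fun M hM => ?_⟩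
  have h1 := B3_prod M hM
  have hlog : 0 < Real.log M := Real.log_pos (by exact_mod_cast (by omega : 1 < M))
  have h2 := Real.log_le_log hlog h1
  have hp : ∀ p ∈ M.primesBelow, (2:ℝ) ≤ p := fun p hp => by
    exact_mod_cast (Nat.prime_of_mem_primesBelow hp).two_le
  have hlt : ∀ p ∈ M.primesBelow, 1/(p:ℝ) ≤ 1/2 := fun p h => 
    one_div_le_one_div_of_le (by norm_num) (hp p h)
  rw [Real.log_prod (fun p h => by have := hlt p h; exact inv_ne_zero (by linarith))] at h2
  have h3 : ∑ p ∈ M.primesBelow, Real.log (1 - 1/(p:ℝ))⁻¹ ≤ ∑ p ∈ M.primesBelow, (1/(p:ℝ) + 2 * (1/(p:ℝ)^2)) := by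
    apply Finset.sum_le_sum
    intro p hpp
    have a := hlt p hpp
    have b := hp p hpp
    set t := 1/(p:ℝ) with ht
    have t0 : 0 < t := by positivity
    have e : 1/(p:ℝ)^2 = t^2 := by rw [ht]; ring
    rw [e]
    have := Real.log_le_sub_one_of_pos (x := (1-t)⁻¹) (inv_pos.2 (by linarith))
    refine this.trans ?_
    have h1t : 0 < 1 - t := by linarith
    rw [sub_le_iff_le_add, inv_le_iff_one_le_mul₀ h1t]
    nlinarith [mul_nonneg (mul_pos t0 t0).le (by linarith : 0 ≤ 1 - 2*t)]
  rw [Finset.sum_add_distrib] at h3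
  have h4 := hs.sum_le_tsum M.primesBelow (fun i _ => by positivity)
  have h5 := Finset.sum_filter_add_sum_filter_not M.primesBelow (fun p => p ∣ h) (fun p => 1/(p:ℝ))
  have h6 : ∑ p ∈ M.primesBelow with p ∣ h, 1/(p:ℝ) ≤ ∑ p ∈ h.divisors, 1/(p:ℝ) := by
    apply Finset.sum_le_sum_of_subset_of_nonneg
    · intro p hp
      rw [Finset.mem_filter] at hp
      exact Nat.mem_divisors.2 ⟨hp.2, hh.ne'⟩
    · intros; positivity
  linarith


lemma B4_ev1 (C : ℝ) : ∀ᶠ L : ℝ in atTop, 0.75 * Real.log L ≤ Real.log (L^(0.9:ℝ) - 1) - C ∧ 2 ≤ L^(0.9:ℝ) ∧ 1 < L := by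
  have h1 : ∀ᶠ L : ℝ in atTop, 2 ≤ L^(0.9:ℝ) := (tendsto_rpow_atTop (by norm_num)).eventually_ge_atTop 2
  have h2 : ∀ᶠ L : ℝ in atTop, C + Real.log 2 ≤ 0.15 * Real.log L := 
    (Real.tendsto_log_atTop.const_mul_atTop (by norm_num : (0:ℝ) < 0.15)).eventually_ge_atTop _
  filter_upwards [h1, h2, eventually_gt_atTop 1] with L h1 h2 h3
  refine ⟨?_, h1, h3⟩
  have h4 : Real.log (L^(0.9:ℝ) / 2) ≤ Real.log (L^(0.9:ℝ) - 1) := Real.log_le_log (by linarith) (by linarith)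
  rw [Real.log_div (by linarith) (by norm_num), Real.log_rpow (by linarith)] at h4
  linarith

lemma B4_choose (h : ℕ) (hh : 0 < h) : ∀ᶠ L : ℝ in atTop, ∃ P : Finset ℕ, (∀ p ∈ P, p.Prime) ∧ (∀ p ∈ P, ¬ p ∣ h) ∧
    (∀ p ∈ P, (p:ℝ) ≤ Real.exp (L^(0.9:ℝ))) ∧ ((P.card : ℝ) ≤ Real.exp (L^(0.9:ℝ))) ∧ 0.75 * Real.log L ≤ ∑ p ∈ P, 1/(p:ℝ) ∧
    ∑ p ∈ P, 1/(p:ℝ) ≤ 0.75 * Real.log L + 1 := by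
  obtain ⟨C, hC⟩ := B3_mertens h hh
  filter_upwards [B4_ev1 C] with L ⟨h1, h2, h3⟩
  set z := Real.exp (L^(0.9:ℝ)) with hz
  have hz2 : 3 ≤ z := by
    have := Real.add_one_le_exp (L^(0.9:ℝ)); linarith
  have hfl : z / 2 ≤ ⌊z⌋₊ := by have := Nat.lt_floor_add_one z; linarith
  have hM : 2 ≤ ⌊z⌋₊ := Nat.le_floor (by norm_num; linarith)
  have h4 := hC _ hM
  have h5 : L^(0.9:ℝ) - 1 ≤ Real.log ⌊z⌋₊ := by
    refine le_trans ?_ (Real.log_le_log (by linarith) hfl)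
    rw [Real.log_div (by linarith) (by norm_num), hz, Real.log_exp]
    have := Real.log_two_lt_d9; linarith
  have h6 := Real.log_le_log (by linarith) h5
  let g : ℕ → ℝ := fun M => ∑ p ∈ M.primesBelow with ¬ p ∣ h, 1/(p:ℝ)
  have h7 : 0.75 * Real.log L ≤ g ⌊z⌋₊ := by
    show _ ≤ ∑ p ∈ _ with ¬ p ∣ h, 1/(p:ℝ)
    linarith
  have hex : ∃ M, 0.75 * Real.log L ≤ g M := ⟨_, h7⟩
  classical
  let m := Nat.find hex
  have hm := Nat.find_spec hex
  have hmM : m ≤ ⌊z⌋₊ := Nat.find_min' hex h7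
  have hmz : (m:ℝ) ≤ z := (Nat.le_floor_iff (by linarith)).1 hmM
  refine ⟨m.primesBelow.filter (fun p => ¬ p ∣ h), ?_, ?_, ?_, ?_, hm, ?_⟩
  · intro p hp
    exact Nat.prime_of_mem_primesBelow (Finset.mem_filter.1 hp).1
  · intro p hp
    exact (Finset.mem_filter.1 hp).2
  · intro p hp
    have := Nat.lt_of_mem_primesBelow (Finset.mem_filter.1 hp).1
    have : (p:ℝ) ≤ m := by exact_mod_cast this.le
    linarith
  · refine le_trans ?_ hmz
    have a := Finset.card_filter_le m.primesBelow (fun p => ¬ p ∣ h)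
    have b : m.primesBelow.card ≤ m := by
      have := Finset.card_filter_le (Finset.range m) Nat.Prime
      simpa [Nat.primesBelow] using this
    exact_mod_cast a.trans b
  · have hm0 : m ≠ 0 := by
      intro h0
      have : 0.75 * Real.log L ≤ g m := hm
      rw [h0] at this
      have e : g 0 = 0 := by simp [g, Nat.primesBelow]
      rw [e] at this
      have := Real.log_pos h3
      linarith
    obtain ⟨j, hj⟩ := Nat.exists_eq_succ_of_ne_zero hm0
    have hlt : ¬ 0.75 * Real.log L ≤ g j := Nat.find_min hex (show j < m by omega)
    have hgj : g (j+1) ≤ g j + 1 := by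
      show ∑ p ∈ (j+1).primesBelow with ¬ p ∣ h, 1/(p:ℝ) ≤ ∑ p ∈ j.primesBelow with ¬ p ∣ h, 1/(p:ℝ) + 1
      have hsub : (j+1).primesBelow.filter (fun p => ¬ p ∣ h) ⊆ insert j (j.primesBelow.filter (fun p => ¬ p ∣ h)) := by
        intro p hp
        simp only [Finset.mem_filter, Finset.mem_insert, Nat.mem_primesBelow] at hp ⊢
        by_cases hpj : p = j
        · left; exact hpj
        · right; exact ⟨⟨by omega, hp.1.2⟩, hp.2⟩
      refine (Finset.sum_le_sum_of_subset_of_nonneg hsub (by intros; positivity)).trans ?_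
      rw [Finset.sum_insert (by simp [Nat.mem_primesBelow])]
      have : 1/(j:ℝ) ≤ 1 := by
        rcases Nat.eq_zero_or_pos j with h0 | h0
        · simp [h0]
        · rw [div_le_one (by exact_mod_cast h0)]; exact_mod_cast h0
      linarith
    show g m ≤ _
    rw [hj]
    push Not at hlt
    have := hgj
    simp only [Nat.succ_eq_add_one]
    linarith

lemma B4_ev2 : ∀ᶠ L : ℝ in atTop, Real.exp 1 * (2 * Real.exp (L^(0.9:ℝ)))^(2*(⌈4*Real.log L⌉₊+3)) ≤ Real.exp 1 * Real.exp (L/2) := by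
  have h1 : ∀ᶠ L : ℝ in atTop, 1 ≤ L^(0.9:ℝ) := (tendsto_rpow_atTop (by norm_num)).eventually_ge_atTop 1
  have h2 : ∀ᶠ L : ℝ in atTop, 1 ≤ L^(0.05:ℝ) := (tendsto_rpow_atTop (by norm_num)).eventually_ge_atTop 1
  have h3 : ∀ᶠ L : ℝ in atTop, 64 ≤ L^(0.05:ℝ) := (tendsto_rpow_atTop (by norm_num)).eventually_ge_atTop 64
  have h4 := (isLittleO_log_rpow_atTop (r := 0.05) (by norm_num)).bound (zero_lt_one)
  filter_upwards [h1, h2, h3, h4, eventually_gt_atTop 1] with L h1 h2 h3 h4 h5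
  have hl : 0 ≤ Real.log L := Real.log_nonneg h5.le
  rw [Real.norm_of_nonneg hl, Real.norm_of_nonneg (by positivity), one_mul] at h4
  have hk : ((⌈4*Real.log L⌉₊:ℕ):ℝ) ≤ 4 * Real.log L + 1 := (Nat.ceil_lt_add_one (by positivity)).le
  have hb : 2 * Real.exp (L^(0.9:ℝ)) ≤ Real.exp (1 + L^(0.9:ℝ)) := by
    rw [Real.exp_add]
    have := Real.add_one_le_exp (1:ℝ)
    gcongr; linarith
  gcongr
  refine (pow_le_pow_left₀ (by positivity) hb _).trans ?_
  rw [← Real.exp_nat_mul]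
  apply Real.exp_le_exp.2
  push_cast
  have e : L = L^(0.9:ℝ) * L^(0.05:ℝ) * L^(0.05:ℝ) := by
    rw [← Real.rpow_add (by linarith), ← Real.rpow_add (by linarith)]; norm_num
  set u := L^(0.9:ℝ)
  set v := L^(0.05:ℝ)
  calc 2 * ((⌈4*Real.log L⌉₊:ℕ) + (3:ℝ)) * (1 + u) ≤ 2 * (8 * v) * (2*u) := by
        gcongr
        · linarith
        · linarith
    _ = (u * v * 64)/2 := by ring
    _ ≤ (u*v*v)/2 := by gcongr
    _ = L/2 := by rw [← e]

lemma B4_ev3 : ∀ᶠ L : ℝ in atTop, Real.exp (L^(0.9:ℝ)) ≤ Real.exp (L/2) := by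
  have h3 : ∀ᶠ L : ℝ in atTop, 2 ≤ L^(0.1:ℝ) := (tendsto_rpow_atTop (by norm_num)).eventually_ge_atTop 2
  filter_upwards [h3, eventually_gt_atTop 1] with L h3 h5
  apply Real.exp_le_exp.2
  have e : L = L^(0.9:ℝ) * L^(0.1:ℝ) := by
    rw [← Real.rpow_add (by linarith)]; norm_num
  have : 0 ≤ L^(0.9:ℝ) := by positivity
  nlinarith

lemma B4_ev4 (ε : ℝ) (hε : 0 < ε) : ∀ᶠ L : ℝ in atTop, 
    Real.exp L * (Real.exp (-(1.5 * Real.log L)) + Real.exp (-(2 * Real.log L))) + 20 * (1 + L) * Real.exp (L/2) ≤ ε * (Real.exp L / L) := by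
  have h3 : ∀ᶠ L : ℝ in atTop, 4/ε ≤ L^(0.5:ℝ) := (tendsto_rpow_atTop (by norm_num)).eventually_ge_atTop _
  have h4' : ∀ᶠ L : ℝ in atTop, 80/ε*4 ≤ Real.exp (L/2) / (L/2)^2 :=
    ((Real.tendsto_exp_div_pow_atTop 2).comp (tendsto_id.atTop_div_const (by norm_num : (0:ℝ) < 2))).eventually_ge_atTop (80/ε*4)
  filter_upwards [h3, h4', eventually_gt_atTop 1] with L h3 h4 h5
  have hL : 0 < L := by linarith
  have e1 : Real.exp (-(1.5 * Real.log L)) = 1 / (L * L^(0.5:ℝ)) := by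
    rw [Real.exp_neg, mul_comm (1.5:ℝ), ← Real.rpow_def_of_pos hL]
    rw [show (1.5:ℝ) = 1 + 0.5 by norm_num, Real.rpow_add hL, Real.rpow_one, one_div]
  have e2 : Real.exp (-(2 * Real.log L)) ≤ Real.exp (-(1.5 * Real.log L)) := by
    apply Real.exp_le_exp.2
    have := Real.log_pos h5
    linarith
  have e3 : 1 / (L * L^(0.5:ℝ)) ≤ ε/4 / L := by
    rw [div_le_div_iff₀ (by positivity) hL]
    rw [div_le_iff₀ hε] at h3
    nlinarith
  have e4 : 20 * (1+L) * Real.exp (L/2) ≤ ε/2 * (Real.exp L / L) := by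
    have : Real.exp L = Real.exp (L/2) * Real.exp (L/2) := by rw [← Real.exp_add]; ring_nf
    rw [this]
    rw [le_div_iff₀ (by positivity), div_mul_eq_mul_div, div_mul_eq_mul_div, div_le_iff₀ hε] at h4
    set E := Real.exp (L/2)
    have hE : 0 < E := Real.exp_pos _
    rw [← mul_div_assoc, le_div_iff₀ hL]
    have : 20 * (1+L) * L ≤ ε/2 * E := by nlinarith
    nlinarith
  have := Real.exp_pos L
  have h6 : Real.exp L * (Real.exp (-(1.5 * Real.log L)) + Real.exp (-(2 * Real.log L))) ≤ Real.exp L * (ε/4/L + ε/4/L) := by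
    gcongr <;> linarith
  have h7 : Real.exp L * (ε/4/L + ε/4/L) = ε/2 * (Real.exp L / L) := by field_simp; norm_num
  linarith

lemma B4_nonprime (x : ℕ) (hx : 1 ≤ x) : (((Finset.range (x+1)).filter (fun n => IsPrimePow n ∧ ¬ n.Prime)).card : ℝ) ≤ 3 * √x * Real.log x := by
  have h1 := Chebyshev.psi_sub_theta_le (x := (x:ℝ)) (by exact_mod_cast hx)
  rw [Chebyshev.psi_sub_theta_eq_sum_not_prime, Nat.floor_natCast] at h1
  have h2 : (((Finset.range (x+1)).filter (fun n => IsPrimePow n ∧ ¬ n.Prime)).card : ℝ) * Real.log 2 ≤ ∑ n ∈ Finset.Ioc 0 x with ¬n.Prime, ArithmeticFunction.vonMangoldt n := by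
    rw [← nsmul_eq_mul]
    refine (Finset.card_nsmul_le_sum _ (fun n => ArithmeticFunction.vonMangoldt n) (Real.log 2) ?_).trans ?_
    · intro n hn
      have hn := (Finset.mem_filter.1 hn).2.1
      rw [ArithmeticFunction.vonMangoldt_apply, if_pos hn]
      apply Real.log_le_log (by norm_num)
      exact_mod_cast (Nat.minFac_prime hn.ne_one).two_le
    · apply Finset.sum_le_sum_of_subset_of_nonneg
      · intro n hn
        simp only [Finset.mem_filter, Finset.mem_range, Finset.mem_Ioc] at hn ⊢
        exact ⟨⟨hn.2.1.pos, by omega⟩, hn.2.2⟩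
      · intros; exact ArithmeticFunction.vonMangoldt_nonneg
  have h3 := Real.log_two_gt_d9
  have h4 : 0 ≤ √(x:ℝ) * Real.log x := mul_nonneg (Real.sqrt_nonneg _) (Real.log_natCast_nonneg x)
  have h5 := h2.trans h1
  nlinarith

lemma B4_primes (h : ℕ) (hh : 0 < h) : ∀ᶠ N : ℕ in atTop,
    (((Finset.range N).filter (fun n => n.Prime ∧ (n+h).Prime)).card : ℝ) ≤
      Real.exp (Real.log N) * (Real.exp (-(1.5 * Real.log (Real.log N))) + Real.exp (-(2 * Real.log (Real.log N)))) + 5 * Real.exp (Real.log N / 2) := by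
  have hT : Tendsto (fun N:ℕ => Real.log N) atTop atTop := Real.tendsto_log_atTop.comp tendsto_natCast_atTop_atTop
  filter_upwards [hT.eventually (B4_choose h hh), hT.eventually B4_ev2, hT.eventually B4_ev3, hT.eventually_ge_atTop 1, eventually_ge_atTop 1] with N hP h2 h3 h4 hN
  set L := Real.log N with hL
  obtain ⟨P, p1, p2, p3, p4, p5, p6⟩ := hP
  set z := Real.exp (L^(0.9:ℝ)) with hz
  have hz1 : 1 ≤ z := Real.one_le_exp (by positivity)
  have key := B2_sieve N h (⌈4*Real.log L⌉₊+3) P p1 p2 (2*z) (by linarith) (by linarith)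
  have hNe : Real.exp L = N := Real.exp_log (by exact_mod_cast hN)
  rw [hNe]
  have hsub : (Finset.range N).filter (fun n => n.Prime ∧ (n+h).Prime) ⊆
      (Finset.range N).filter (fun n => ∀ p ∈ P, ¬ p ∣ n * (n+h)) ∪ Finset.range (⌊z⌋₊+1) := by
    intro n hn
    simp only [Finset.mem_filter, Finset.mem_union, Finset.mem_range] at hn ⊢
    by_cases hnz : n < ⌊z⌋₊ + 1
    · right; exact hnz
    · left
      refine ⟨hn.1, fun p hp hd => ?_⟩
      have hpz : p ≤ ⌊z⌋₊ := Nat.le_floor (p3 p hp)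
      rcases (p1 p hp).dvd_mul.1 hd with hd | hd
      · have := (Nat.prime_dvd_prime_iff_eq (p1 p hp) hn.2.1).1 hd
        omega
      · have := (Nat.prime_dvd_prime_iff_eq (p1 p hp) hn.2.2).1 hd
        omega
  have hcard := (Finset.card_le_card hsub).trans (Finset.card_union_le _ _)
  rw [Finset.card_range] at hcard
  have hcard' : (((Finset.range N).filter (fun n => n.Prime ∧ (n+h).Prime)).card : ℝ) ≤
      (((Finset.range N).filter (fun n => ∀ p ∈ P, ¬ p ∣ n * (n+h))).card : ℝ) + ((⌊z⌋₊:ℝ)+1) := by exact_mod_cast hcard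
  have hfl : (⌊z⌋₊:ℝ) ≤ z := Nat.floor_le (by linarith)
  have hl0 : 0 ≤ Real.log L := Real.log_nonneg h4
  have he := Real.exp_one_lt_d9
  have i1 : Real.exp (-(2 * ∑ p ∈ P, 1/(p:ℝ))) ≤ Real.exp (-(1.5 * Real.log L)) := by
    apply Real.exp_le_exp.2; linarith
  have i2 : Real.exp (2 * Real.exp 1 * (∑ p ∈ P, 1/(p:ℝ)) - 2*(⌈4*Real.log L⌉₊+3 : ℕ)) ≤ Real.exp (-(2 * Real.log L)) := by
    apply Real.exp_le_exp.2
    have := Nat.le_ceil (4*Real.log L)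
    push_cast
    have : 2 * Real.exp 1 * (∑ p ∈ P, 1/(p:ℝ)) ≤ 5.6 * (0.75 * Real.log L + 1) := by
      gcongr; linarith
    linarith
  have i3 : (N:ℝ) * (Real.exp (-(2 * ∑ p ∈ P, 1/(p:ℝ))) + Real.exp (2 * Real.exp 1 * (∑ p ∈ P, 1/(p:ℝ)) - 2*(⌈4*Real.log L⌉₊+3 : ℕ))) ≤ N * (Real.exp (-(1.5 * Real.log L)) + Real.exp (-(2 * Real.log L))) := by gcongr
  have i4 : 1 ≤ Real.exp (L/2) := Real.one_le_exp (by linarith)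
  have i5 : Real.exp 1 * Real.exp (L/2) ≤ 3 * Real.exp (L/2) := by gcongr; linarith
  linarith

lemma B4_pairs (h : ℕ) (hh : 0 < h) (ε : ℝ) (hε : 0 < ε) : ∀ᶠ N : ℕ in atTop,
    (((Finset.range N).filter (fun n => IsPrimePow n ∧ IsPrimePow (n+h))).card : ℝ) ≤ ε * (N / Real.log N) := by
  have hT : Tendsto (fun N:ℕ => Real.log N) atTop atTop := Real.tendsto_log_atTop.comp tendsto_natCast_atTop_atTop
  filter_upwards [B4_primes h hh, hT.eventually (B4_ev4 ε hε), hT.eventually_ge_atTop 1, eventually_ge_atTop 1, eventually_ge_atTop h] with N h1 h2 h4 hN hNh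
  set L := Real.log N with hL
  have hNe : Real.exp L = N := Real.exp_log (by exact_mod_cast hN)
  have hs : √(N:ℝ) = Real.exp (L/2) := by
    rw [← hNe, Real.exp_half]
  rw [hNe] at h2 h1
  have hsub : (Finset.range N).filter (fun n => IsPrimePow n ∧ IsPrimePow (n+h)) ⊆
      (Finset.range N).filter (fun n => n.Prime ∧ (n+h).Prime) ∪
      ((Finset.range (2*N+1)).filter (fun n => IsPrimePow n ∧ ¬ n.Prime) ∪
       ((Finset.range (2*N+1)).filter (fun n => IsPrimePow n ∧ ¬ n.Prime)).image (fun n => n - h)) := by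
    intro n hn
    simp only [Finset.mem_filter, Finset.mem_union, Finset.mem_range, Finset.mem_image] at hn ⊢
    by_cases a : n.Prime
    · by_cases b : (n+h).Prime
      · left; exact ⟨hn.1, a, b⟩
      · right; right; exact ⟨n+h, ⟨by omega, hn.2.2, b⟩, by omega⟩
    · right; left; exact ⟨by omega, hn.2.1, a⟩
  have hc := (Finset.card_le_card hsub).trans ((Finset.card_union_le _ _).trans (Nat.add_le_add_left ((Finset.card_union_le _ _).trans (Nat.add_le_add_left Finset.card_image_le _)) _))
  have hc' : (((Finset.range N).filter (fun n => IsPrimePow n ∧ IsPrimePow (n+h))).card : ℝ) ≤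
    (((Finset.range N).filter (fun n => n.Prime ∧ (n+h).Prime)).card : ℝ) + 
    ((((Finset.range (2*N+1)).filter (fun n => IsPrimePow n ∧ ¬ n.Prime)).card : ℝ) + (((Finset.range (2*N+1)).filter (fun n => IsPrimePow n ∧ ¬ n.Prime)).card : ℝ)) := by exact_mod_cast hc
  have hnp := B4_nonprime (2*N) (by omega)
  push_cast at hnp
  rw [Real.log_mul (by norm_num) (by positivity), Real.sqrt_mul (by norm_num), hs, ← hL] at hnp
  have hl2 := Real.log_two_lt_d9
  have hs2 : √2 ≤ 1.5 := by
    rw [Real.sqrt_le_left (by norm_num)]; norm_num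
  have hE : 1 ≤ Real.exp (L/2) := Real.one_le_exp (by linarith)
  have hb : 3 * (√2 * Real.exp (L/2)) * (Real.log 2 + L) ≤ 3 * (1.5 * Real.exp (L/2)) * (1 + L) := by
    have : 0 ≤ Real.log 2 := Real.log_nonneg (by norm_num)
    gcongr; linarith
  have : (0:ℝ) ≤ Real.exp (L/2) * L := by positivity
  nlinarith



noncomputable def CG (a b : ℝ) : Finset ℤ := by
  classical
  exact (Finset.Icc ⌈a⌉ ⌊b⌋).filter (fun m => IsPrimePow m.natAbs)

lemma CG_mem (a b : ℝ) (m : ℤ) : m ∈ CG a b ↔ (a ≤ m ∧ (m:ℝ) ≤ b) ∧ IsPrimePow m.natAbs := by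
  simp [CG, Int.ceil_le, Int.le_floor]

lemma CG_set (a b : ℝ) : PrimePowR ∩ Set.Icc a b = (((CG a b).image (fun m : ℤ => (m:ℝ)) : Finset ℝ) : Set ℝ) := by
  ext x
  simp only [Finset.coe_image, Set.mem_inter_iff, Set.mem_image, Finset.mem_coe, CG_mem, Set.mem_Icc]
  constructor
  · rintro ⟨⟨p, k, hp, hk, h | h⟩, h2⟩
    · refine ⟨((p^k : ℕ):ℤ), ⟨by rw [Int.cast_natCast, ← h]; exact h2, ?_⟩, by rw [Int.cast_natCast, ← h]⟩
      rw [Int.natAbs_natCast]; exact hp.isPrimePow.pow (by omega)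
    · refine ⟨-((p^k : ℕ):ℤ), ⟨by rw [Int.cast_neg, Int.cast_natCast, ← h]; exact h2, ?_⟩, by rw [Int.cast_neg, Int.cast_natCast, ← h]⟩
      rw [Int.natAbs_neg, Int.natAbs_natCast]; exact hp.isPrimePow.pow (by omega)
  · rintro ⟨m, ⟨h1, h2⟩, rfl⟩
    refine ⟨?_, h1⟩
    obtain ⟨p, k, hp, hk, e⟩ := (isPrimePow_nat_iff _).1 h2
    refine ⟨p, k, hp, hk, ?_⟩
    rw [e]
    rcases Int.natAbs_eq m with h | h
    · left; conv_lhs => rw [h]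
      simp
    · right; conv_lhs => rw [h]
      simp

lemma CG_auto (a b : ℝ) (f : ℝ → ℂ) : autoCorr (PrimePowR ∩ Set.Icc a b) f =
    ((CG a b).card : ℂ)⁻¹ * ∑ x ∈ CG a b, ∑ y ∈ CG a b, f ((x - y : ℤ) : ℝ) := by
  have hinj : Set.InjOn (fun m : ℤ => (m:ℝ)) (CG a b) := fun x _ y _ h => Int.cast_injective h
  rw [autoCorr, CG_set, Set.ncard_coe_finset, Finset.card_image_of_injOn hinj]
  congr 1
  rw [finsum_mem_coe_finset, Finset.sum_image hinj]
  apply Finset.sum_congr rfl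
  intro x _
  rw [finsum_mem_coe_finset, Finset.sum_image hinj]
  push_cast
  rfl

lemma CG_neg (a b : ℝ) : (CG a b).card = (CG (-b) (-a)).card := by
  apply Finset.card_bij (fun m _ => -m)
  · intro m hm
    rw [CG_mem] at hm ⊢
    push_cast
    exact ⟨⟨by linarith [hm.1.2], by linarith [hm.1.1]⟩, by simpa using hm.2⟩
  · intro m _ n _ h; simpa using h
  · intro m hm
    refine ⟨-m, ?_, by simp⟩
    rw [CG_mem] at hm ⊢
    push_cast
    exact ⟨⟨by linarith [hm.1.2], by linarith [hm.1.1]⟩, by simpa using hm.2⟩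

lemma C_low1 (D : ℝ) (hD : 1 ≤ D) : ∃ c > 0, ∀ᶠ L : ℝ in atTop, ∀ a b : ℝ, b - a = L → 0 ≤ a + b → b ≤ D * L →
    c * (L / Real.log L) ≤ (CG a b).card := by
  set δ := 1/(4*D) with hδ
  have hδ0 : 0 < δ := by positivity
  have hδD : δ * (4*D) = 1 := by rw [hδ]; field_simp
  have hδ1 : δ ≤ 1 := by nlinarith
  obtain ⟨c, hc, hA⟩ := thmA δ hδ0
  obtain ⟨X, hX⟩ := eventually_atTop.1 hA
  refine ⟨c / 12, by positivity, ?_⟩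
  have t1 : ∀ᶠ L : ℝ in atTop, X + 1 ≤ Real.log (L/2) := 
    (Real.tendsto_log_atTop.comp (tendsto_id.atTop_div_const (by norm_num : (0:ℝ) < 2))).eventually_ge_atTop _
  have t1' : ∀ᶠ L : ℝ in atTop, 2 ≤ Real.log (L/2) := 
    (Real.tendsto_log_atTop.comp (tendsto_id.atTop_div_const (by norm_num : (0:ℝ) < 2))).eventually_ge_atTop _
  filter_upwards [t1, t1', eventually_ge_atTop D, eventually_ge_atTop 3] with L h1 h1' h2 h3
  intro a b hL hab hbD
  have hb : L/2 ≤ b := by linarith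
  have hb0 : 0 < b := by linarith
  have hlb : Real.log (L/2) ≤ Real.log b := Real.log_le_log (by linarith) hb
  have hlb2 : Real.log b ≤ 2 * Real.log L := by
    have := Real.log_le_log hb0 (show b ≤ L * L by nlinarith)
    rw [Real.log_mul (by linarith) (by linarith)] at this
    linarith
  set x := Real.log b - δ with hx
  have hA := hX x (by linarith)
  have e1 : Real.exp (x+δ) = b := by rw [hx, sub_add_cancel, Real.exp_log hb0]
  have e2 : a ≤ Real.exp (x-δ) := by
    rw [hx, sub_sub, sub_eq_add_neg, Real.exp_add, Real.exp_log hb0]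
    have := Real.add_one_le_exp (-(δ+δ))
    have h5 : b * (-(δ+δ) + 1) ≤ b * Real.exp (-(δ+δ)) := by gcongr
    have : δ * b ≤ δ * (D * L) := by gcongr
    nlinarith
  have e3 : L / 6 ≤ Real.exp x := by
    rw [hx, sub_eq_add_neg, Real.exp_add, Real.exp_log hb0]
    have q1 : Real.exp (-1) ≤ Real.exp (-δ) := Real.exp_le_exp.2 (by linarith)
    have q2 : (1:ℝ)/3 ≤ Real.exp (-1) := by
      rw [Real.exp_neg, ← one_div]
      apply one_div_le_one_div_of_le (Real.exp_pos _)
      have := Real.exp_one_lt_d9; linarith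
    nlinarith
  have hx0 : 0 < x := by linarith
  have hxle : x ≤ 2 * Real.log L := by linarith
  calc c/12 * (L / Real.log L) = c * (L/6) / (2 * Real.log L) := by ring
    _ ≤ c * Real.exp x / x := by gcongr
    _ ≤ _ := hA
    _ ≤ (CG a b).card := by
      have : ((Finset.Icc ⌈Real.exp (x-δ)⌉₊ ⌊Real.exp (x+δ)⌋₊).filter IsPrimePow).card ≤ (CG a b).card := by
        apply Finset.card_le_card_of_injOn (fun n : ℕ => (n:ℤ))
        · intro n hn
          have hn := Finset.mem_filter.1 hn
          have hn1 := Finset.mem_Icc.1 hn.1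
          rw [Finset.mem_coe, CG_mem]
          rw [Nat.ceil_le, Nat.le_floor_iff (by positivity), e1] at hn1
          refine ⟨⟨?_, ?_⟩, ?_⟩
          · rw [Int.cast_natCast]; linarith
          · rw [Int.cast_natCast]; linarith
          · simpa using hn.2
        · intro m _ n _ h; exact Nat.cast_injective (R := ℤ) h
      exact_mod_cast this

lemma C_low (d : ℝ) (hd : 0 < d) : ∃ c > 0, ∀ᶠ L : ℝ in atTop, ∀ a b : ℝ, b - a = L → |a| < d * L →
    c * (L / Real.log L) ≤ (CG a b).card := by
  obtain ⟨c, hc, h⟩ := C_low1 (d+1) (by linarith)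
  refine ⟨c, hc, ?_⟩
  filter_upwards [h, eventually_ge_atTop 0] with L h hL0
  intro a b hL ha
  have := abs_lt.1 ha
  by_cases hab : 0 ≤ a + b
  · exact h a b hL hab (by linarith)
  · rw [CG_neg]
    exact h (-b) (-a) (by linarith) (by linarith) (by linarith)

lemma C_pairs (a b : ℝ) (N k : ℕ) (h : ℤ) (hk : h.natAbs = k) (hk0 : 0 < k) (hN : ∀ m ∈ CG a b, m.natAbs < N) :
    ((CG a b).filter (fun y => y + h ∈ CG a b)).card ≤
      4 * ((Finset.range N).filter (fun n => IsPrimePow n ∧ IsPrimePow (n+k))).card + (2*k+1) := by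
  set T := (Finset.range N).filter (fun n => IsPrimePow n ∧ IsPrimePow (n+k)) with hT
  have hsub : (CG a b).filter (fun y => y + h ∈ CG a b) ⊆
      (T.image (fun n : ℕ => (n:ℤ)) ∪ T.image (fun n : ℕ => (n:ℤ)+k)) ∪
      (T.image (fun n : ℕ => -(n:ℤ)) ∪ T.image (fun n : ℕ => -((n:ℤ)+k))) ∪ Finset.Icc (-(k:ℤ)) k := by
    intro y hy
    rw [Finset.mem_filter] at hy
    have n1 := hN _ hy.1
    have n2 := hN _ hy.2
    have p1 := ((CG_mem _ _ _).1 hy.1).2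
    have p2 := ((CG_mem _ _ _).1 hy.2).2
    have hTm : ∀ n : ℕ, n < N → IsPrimePow n → IsPrimePow (n+k) → n ∈ T := fun n x y z => by
      rw [hT, Finset.mem_filter, Finset.mem_range]; exact ⟨x, y, z⟩
    simp only [Finset.mem_union, Finset.mem_image, Finset.mem_Icc]
    by_cases hyk : -(k:ℤ) ≤ y ∧ y ≤ k
    · right; exact hyk
    left
    by_cases hpos : 0 < y
    · left
      by_cases hh : 0 < h
      · left
        refine ⟨y.natAbs, hTm _ n1 p1 ?_, by omega⟩
        convert p2 using 1; omega
      · right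
        refine ⟨(y+h).natAbs, hTm _ n2 p2 ?_, by omega⟩
        convert p1 using 1; omega
    · right
      by_cases hh : 0 < h
      · right
        refine ⟨(y+h).natAbs, hTm _ n2 p2 ?_, by omega⟩
        convert p1 using 1; omega
      · left
        refine ⟨y.natAbs, hTm _ n1 p1 ?_, by omega⟩
        convert p2 using 1; omega
  refine (Finset.card_le_card hsub).trans ((Finset.card_union_le _ _).trans ?_)
  have c0 : (Finset.Icc (-(k:ℤ)) k).card = 2*k+1 := by rw [Int.card_Icc]; omega
  have c1 : (T.image (fun n : ℕ => (n:ℤ)) ∪ T.image (fun n : ℕ => (n:ℤ)+k)).card ≤ T.card + T.card :=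
    (Finset.card_union_le _ _).trans (Nat.add_le_add Finset.card_image_le Finset.card_image_le)
  have c2 : (T.image (fun n : ℕ => -(n:ℤ)) ∪ T.image (fun n : ℕ => -((n:ℤ)+k))).card ≤ T.card + T.card :=
    (Finset.card_union_le _ _).trans (Nat.add_le_add Finset.card_image_le Finset.card_image_le)
  have c3 := Finset.card_union_le (T.image (fun n : ℕ => (n:ℤ)) ∪ T.image (fun n : ℕ => (n:ℤ)+k)) (T.image (fun n : ℕ => -(n:ℤ)) ∪ T.image (fun n : ℕ => -((n:ℤ)+k)))
  omega

lemma C_diff (G : Finset ℤ) (hG : 0 < G.card) (f : ℝ → ℂ) (B : ℝ) (hB : ∀ x, ‖f x‖ ≤ B) (R : ℕ) (hR : ∀ x, f x ≠ 0 → |x| ≤ R) (K : ℝ) 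
    (hK : ∀ h : ℤ, h ≠ 0 → h.natAbs ≤ R → ((G.filter (fun y => y + h ∈ G)).card : ℝ) ≤ K) (hK0 : 0 ≤ K) :
    ‖(G.card : ℂ)⁻¹ * ∑ x ∈ G, ∑ y ∈ G, f ((x - y : ℤ) : ℝ) - f 0‖ ≤ (G.card : ℝ)⁻¹ * ((2*R+1) * K * B) := by
  have hB0 : 0 ≤ B := (norm_nonneg _).trans (hB 0)
  have e1 : ∑ x ∈ G, ∑ y ∈ G, f ((x - y : ℤ) : ℝ) = G.card * f 0 + ∑ y ∈ G, ∑ x ∈ G.erase y, f ((x - y : ℤ) : ℝ) := by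
    rw [Finset.sum_comm]
    have : ∀ y ∈ G, ∑ x ∈ G, f ((x - y : ℤ) : ℝ) = f 0 + ∑ x ∈ G.erase y, f ((x - y : ℤ) : ℝ) := by
      intro y hy
      rw [← Finset.add_sum_erase G _ hy]
      simp
    rw [Finset.sum_congr rfl this, Finset.sum_add_distrib, Finset.sum_const, nsmul_eq_mul]
  have hGc : (G.card : ℂ) ≠ 0 := by exact_mod_cast hG.ne'
  rw [e1, mul_add, ← mul_assoc, inv_mul_cancel₀ hGc, one_mul, add_sub_cancel_left, norm_mul, norm_inv, Complex.norm_natCast]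
  gcongr
  have e2 : ∀ y ∈ G, ‖∑ x ∈ G.erase y, f ((x - y : ℤ) : ℝ)‖ ≤ ∑ h ∈ (Finset.Icc (-(R:ℤ)) R).erase 0, if y + h ∈ G then B else 0 := by
    intro y hy
    refine (norm_sum_le _ _).trans ?_
    rw [← Finset.sum_filter]
    have e3 : ∑ x ∈ G.erase y, ‖f ((x - y : ℤ) : ℝ)‖ = ∑ x ∈ (G.erase y).filter (fun x => (x-y).natAbs ≤ R), ‖f ((x - y : ℤ) : ℝ)‖ := by
      rw [Finset.sum_filter_of_ne]
      intro x _ hx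
      have := hR _ (norm_ne_zero_iff.1 hx)
      have h2 : |x - y| ≤ (R:ℤ) := by exact_mod_cast this
      rw [abs_le] at h2
      omega
    rw [e3]
    refine (Finset.sum_le_sum (fun x _ => hB _)).trans ?_
    rw [Finset.sum_const, Finset.sum_const, nsmul_eq_mul, nsmul_eq_mul]
    refine mul_le_mul_of_nonneg_right (Nat.cast_le.2 ?_) hB0
    apply Finset.card_le_card_of_injOn (fun x => x - y)
    · intro x hx
      have hx := Finset.mem_filter.1 hx
      have hx1 := Finset.mem_erase.1 hx.1
      simp only [Finset.mem_coe, Finset.mem_filter, Finset.mem_erase, Finset.mem_Icc]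
      refine ⟨⟨by have := hx1.1; omega, by have := hx.2; omega⟩, ?_⟩
      rw [add_sub_cancel]; exact hx1.2
    · intro x _ x' _ h; simpa using h
  refine (norm_sum_le _ _).trans ((Finset.sum_le_sum e2).trans ?_)
  rw [Finset.sum_comm]
  have e4 : ∀ h ∈ (Finset.Icc (-(R:ℤ)) R).erase 0, (∑ y ∈ G, if y + h ∈ G then B else 0) ≤ K * B := by
    intro h hh
    rw [← Finset.sum_filter, Finset.sum_const, nsmul_eq_mul]
    simp only [Finset.mem_erase, Finset.mem_Icc] at hh
    gcongr
    exact hK h hh.1 (by omega)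
  refine (Finset.sum_le_sum e4).trans ?_
  rw [Finset.sum_const, nsmul_eq_mul, mul_assoc]
  gcongr
  have c1 := Finset.card_erase_le (s := Finset.Icc (-(R:ℤ)) R) (a := 0)
  have c0 : (Finset.Icc (-(R:ℤ)) R).card = 2*R+1 := by rw [Int.card_Icc]; omega
  rw [c0] at c1
  exact_mod_cast c1

theorem prime_powers_counting_autocorrelation
    (a b : ℕ → ℝ)
    (hw : Tendsto (fun n => b n - a n) atTop atTop)
    (hd : ∃ d : ℝ, 0 < d ∧ ∀ n, |a n| < d * (b n - a n)) :
    ∀ f : ℝ → ℂ, Continuous f → HasCompactSupport f →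
      Tendsto (fun n => autoCorr (PrimePowR ∩ Set.Icc (a n) (b n)) f) atTop (nhds (f 0)) := by
  intro f hf hfc
  obtain ⟨d, hd0, hd⟩ := hd
  obtain ⟨B, hB⟩ := hfc.exists_bound_of_continuous hf
  have hB0 : 0 ≤ B := (norm_nonneg _).trans (hB 0)
  obtain ⟨R, hR⟩ : ∃ R : ℕ, ∀ x, f x ≠ 0 → |x| ≤ R := by
    obtain ⟨r, hr⟩ := hfc.isBounded.exists_norm_le
    obtain ⟨R, hR⟩ := exists_nat_ge r
    exact ⟨R, fun x hx => (hr x (subset_tsupport f hx)).trans hR⟩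
  obtain ⟨c, hc, hlow⟩ := C_low d hd0
  rw [Metric.tendsto_nhds]
  intro ε hε
  set M := (2*(R:ℝ)+1) * (4*(d+2)+1) * B / c with hM
  have hM0 : 0 ≤ M := by positivity
  set η := ε / (2*(M+1)) with hη
  have hη0 : 0 < η := by positivity
  have hηM : M * η < ε := by
    rw [hη, mul_div_assoc', div_lt_iff₀ (by positivity)]
    nlinarith
  have hlogw : Tendsto (fun L : ℝ => L / Real.log L) atTop atTop := by
    have h1 : Tendsto (fun L : ℝ => Real.exp (Real.log L) / Real.log L ^ 1) atTop atTop :=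
      (Real.tendsto_exp_div_pow_atTop 1).comp Real.tendsto_log_atTop
    refine h1.congr' ?_
    filter_upwards [eventually_gt_atTop 0] with L hL
    rw [Real.exp_log hL, pow_one]
  have hpair : ∀ᶠ N : ℕ in atTop, ∀ k ∈ Finset.Icc 1 R, 
      (((Finset.range N).filter (fun n => IsPrimePow n ∧ IsPrimePow (n+k))).card : ℝ) ≤ η * (N / Real.log N) := by
    rw [Filter.eventually_all_finset]
    intro k hk
    exact B4_pairs k (by rw [Finset.mem_Icc] at hk; omega) η hη0
  have hNt : Tendsto (fun L : ℝ => ⌊(d+1)*L⌋₊ + 1) atTop atTop := 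
    (tendsto_add_atTop_nat 1).comp (tendsto_nat_floor_atTop.comp (tendsto_id.const_mul_atTop (by linarith : 0 < d+1)))
  have hev : ∀ᶠ L : ℝ in atTop, ∀ a b : ℝ, b - a = L → |a| < d * L → 
      dist (autoCorr (PrimePowR ∩ Set.Icc a b) f) (f 0) < ε := by
    filter_upwards [hlow, hNt.eventually hpair, hlogw.eventually_ge_atTop ((2*R+1)/η), eventually_ge_atTop 3] with L h1 h2 h3 h4
    intro a b hL ha
    have hlogL : 0 < Real.log L := Real.log_pos (by linarith)
    set W := L / Real.log L with hW
    have hW0 : 0 < W := by positivity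
    have hcard := h1 a b hL ha
    have hcp : (0:ℝ) < (CG a b).card := lt_of_lt_of_le (by positivity) hcard
    set N := ⌊(d+1)*L⌋₊ + 1 with hN
    have hab := abs_lt.1 ha
    have hNm : ∀ m ∈ CG a b, m.natAbs < N := by
      intro m hm
      have hm := ((CG_mem _ _ _).1 hm).1
      rw [hN, Nat.lt_succ_iff]
      apply Nat.le_floor
      rw [Nat.cast_natAbs, Int.cast_abs, abs_le]
      constructor <;> linarith
    have hN1 : (N:ℝ) ≤ (d+2)*L := by
      have := Nat.floor_le (a := (d+1)*L) (by positivity)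
      rw [hN]; push_cast; linarith
    have hN2 : L ≤ N := by
      have := Nat.lt_floor_add_one ((d+1)*L)
      rw [hN]; push_cast; nlinarith
    have hNW : (N:ℝ) / Real.log N ≤ (d+2) * W := by
      rw [hW, ← mul_div_assoc]
      have := Real.log_le_log (by linarith) hN2
      gcongr
    rw [div_le_iff₀ hη0] at h3
    rw [CG_auto, dist_eq_norm]
    have key := C_diff (CG a b) (by exact_mod_cast hcp) f B hB R hR (η * W * (4*(d+2)+1)) (by
      intro h hh0 hhR
      have q1 := C_pairs a b N h.natAbs h rfl (by omega) hNm
      have q2 := h2 h.natAbs (by rw [Finset.mem_Icc]; omega)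
      have q1' : (((CG a b).filter (fun y => y + h ∈ CG a b)).card : ℝ) ≤ 
        4 * (((Finset.range N).filter (fun n => IsPrimePow n ∧ IsPrimePow (n+h.natAbs))).card : ℝ) + (2*(h.natAbs:ℝ)+1) := by exact_mod_cast q1
      have q3 : (h.natAbs:ℝ) ≤ R := by exact_mod_cast hhR
      have q4 : η * ((N:ℝ) / Real.log N) ≤ η * ((d+2) * W) := by gcongr
      nlinarith) (by positivity)
    refine key.trans_lt (lt_of_le_of_lt ?_ hηM)
    rw [inv_mul_le_iff₀ hcp]
    calc (2*(R:ℝ)+1) * (η * W * (4*(d+2)+1)) * B = c * W * (M * η) := by rw [hM]; field_simp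
      _ ≤ (CG a b).card * (M * η) := by gcongr
  filter_upwards [hw.eventually hev] with n hn
  exact hn (a n) (b n) rfl (hd n)
end

section
/- Let d ≥ 1 be an integer not divisible by 3, and assume ℙ_d is infinite. Let (n_k) be a strictly increasing sequence of natural numbers and γ a Radon measure on ℝ such that, writing F_m = ℙ_d ∩ [−m, m], for every continuous compactly supported f : ℝ → ℂ one has (1/card F_{n_k})·Σ_{x,y∈F_{n_k}} f(x−y) → ∫ f dγ as k → ∞. Then γ({d}) = 1/2; in particular γ ≠ δ_0. -/
open Filter Topology Set MeasureTheory

/-- The set of prime numbers together with their negatives, as a subset of `ℝ`. -/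
def PrimesR : Set ℝ := {x | ∃ p : ℕ, p.Prime ∧ (x = (p : ℝ) ∨ x = -(p : ℝ))}

/-- `ℙ_d = {p : p ∈ ℙ, p + d ∈ ℙ} ∪ {p + d : p ∈ ℙ, p + d ∈ ℙ}`. -/
def Pd (d : ℕ) : Set ℝ :=
  {x | (x ∈ PrimesR ∧ x + d ∈ PrimesR) ∨ (x - d ∈ PrimesR ∧ x ∈ PrimesR)}

lemma PR_int {x : ℝ} (h : x ∈ PrimesR) : ∃ z : ℤ, x = z ∧ (3 ∣ z → z = 3 ∨ z = -3) := by
  obtain ⟨p, hp, h | h⟩ := h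
  · refine ⟨p, by simp [h], fun h3 => Or.inl ?_⟩
    have : 3 ∣ p := by exact_mod_cast h3
    have := (Nat.prime_dvd_prime_iff_eq Nat.prime_three hp).1 this
    omega
  · refine ⟨-p, by simp [h], fun h3 => Or.inr ?_⟩
    have : 3 ∣ p := by
      have := (dvd_neg.1 h3)
      exact_mod_cast this
    have := (Nat.prime_dvd_prime_iff_eq Nat.prime_three hp).1 this
    omega

lemma Pd_PR {d : ℕ} {x : ℝ} (h : x ∈ Pd d) : x ∈ PrimesR := by
  rcases h with h | h
  · exact h.1
  · exact h.2

lemma F_fin (d m : ℕ) : (Pd d ∩ Set.Icc (-(m : ℝ)) (m : ℝ)).Finite := by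
  refine ((Finset.Icc (-(m:ℤ)) m).image (fun z : ℤ => (z : ℝ))).finite_toSet.subset ?_
  rintro x ⟨hx, h1, h2⟩
  obtain ⟨z, rfl, -⟩ := PR_int (Pd_PR hx)
  simp only [Finset.coe_image, Set.mem_image, Finset.mem_coe, Finset.mem_Icc]
  exact ⟨z, ⟨by exact_mod_cast h1, by exact_mod_cast h2⟩, rfl⟩

open Classical in
lemma count (d : ℕ) (h3 : ¬ (3 ∣ d)) (m : ℕ) (S : Finset ℝ)
    (hS : ∀ x, x ∈ S ↔ x ∈ Pd d ∩ Set.Icc (-(m : ℝ)) (m : ℝ)) :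
    (S.card ≤ 2 * (S.filter (fun x : ℝ => x - (d:ℝ) ∈ S)).card + (2 * d + 2)) ∧
    2 * (S.filter (fun x : ℝ => x - (d:ℝ) ∈ S)).card ≤ S.card + 6 := by
  set U := S.filter (fun x : ℝ => x - (d:ℝ) ∈ S) with hU
  set L := S.filter (fun x : ℝ => x + (d:ℝ) ∈ S) with hL
  have hUL : U.card = L.card := by
    apply Finset.card_bij (fun (x : ℝ) _ => x - (d:ℝ))
    · intro a ha
      simp only [hU, hL, Finset.mem_filter] at ha ⊢
      simpa using ha.symm
    · intro a _ b _ h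
      simpa using h
    · intro b hb
      simp only [hU, hL, Finset.mem_filter] at hb ⊢
      exact ⟨b + d, by simpa using hb.symm, by simp⟩
  have hI : (U ∩ L).card ≤ 6 := by
    have : U ∩ L ⊆ ((({3, -3, 3 - (d:ℤ), 3 + (d:ℤ), -3 - (d:ℤ), -3 + (d:ℤ)} : Finset ℤ)).image
        (fun z : ℤ => (z : ℝ))) := by
      intro x hx
      simp only [hU, hL, Finset.mem_inter, Finset.mem_filter] at hx
      obtain ⟨⟨h1, h2⟩, -, h4⟩ := hx
      obtain ⟨a, ha, ha'⟩ := PR_int (Pd_PR ((hS _).1 h1).1)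
      obtain ⟨b, hb, hb'⟩ := PR_int (Pd_PR ((hS _).1 h2).1)
      obtain ⟨c, hc, hc'⟩ := PR_int (Pd_PR ((hS _).1 h4).1)
      have e1 : b = a - d := by rw [ha] at hb; exact_mod_cast hb.symm
      have e2 : c = a + d := by rw [ha] at hc; exact_mod_cast hc.symm
      refine Finset.mem_image.2 ⟨a, ?_, ha.symm⟩
      simp only [Finset.mem_insert, Finset.mem_singleton]
      have h3a : a % 3 = 0 ∨ a % 3 = 1 ∨ a % 3 = 2 := by omega
      have h3d : (d:ℤ) % 3 = 1 ∨ (d:ℤ) % 3 = 2 := by omega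
      rcases h3a with h | h | h <;> rcases h3d with h' | h' <;> omega
    exact (Finset.card_le_card this).trans (Finset.card_image_le.trans Finset.card_le_six)
  have hB : (S \ (U ∪ L)).card ≤ 2 * d + 2 := by
    have : S \ (U ∪ L) ⊆ ((Finset.Icc (m - d : ℤ) m ∪ Finset.Icc (-m : ℤ) (-m + d)).image
        (fun z : ℤ => (z : ℝ))) := by
      intro x hx
      simp only [hU, hL, Finset.mem_sdiff, Finset.mem_union, Finset.mem_filter, not_or, not_and]
        at hx
      obtain ⟨h1, h2, h4⟩ := hx
      have h2 := h2 h1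
      have h4 := h4 h1
      obtain ⟨hP, l, u⟩ := (hS _).1 h1
      obtain ⟨a, ha, -⟩ := PR_int (Pd_PR hP)
      refine Finset.mem_image.2 ⟨a, ?_, ha.symm⟩
      simp only [Finset.mem_union, Finset.mem_Icc]
      subst ha
      have l' : -(m:ℤ) ≤ a := by exact_mod_cast l
      have u' : a ≤ (m:ℤ) := by exact_mod_cast u
      rcases hP with hP | hP
      · left
        refine ⟨?_, u'⟩
        by_contra hlt
        apply h4
        refine (hS _).2 ⟨Or.inr ⟨by simpa using hP.1, hP.2⟩, ?_, ?_⟩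
        · have : -(m:ℤ) ≤ a + d := by omega
          exact_mod_cast this
        · have : a + d ≤ (m:ℤ) := by omega
          exact_mod_cast this
      · right
        refine ⟨l', ?_⟩
        by_contra hlt
        apply h2
        refine (hS _).2 ⟨Or.inl ⟨hP.1, by simpa using hP.2⟩, ?_, ?_⟩
        · have : -(m:ℤ) ≤ a - d := by omega
          exact_mod_cast this
        · have : a - d ≤ (m:ℤ) := by omega
          exact_mod_cast this
    refine (Finset.card_le_card this).trans (Finset.card_image_le.trans
      ((Finset.card_union_le _ _).trans ?_))
    simp only [Int.card_Icc]
    omega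
  have hsub : U ∪ L ⊆ S := Finset.union_subset (Finset.filter_subset _ _) (Finset.filter_subset _ _)
  have k1 := Finset.card_union_add_card_inter U L
  have k2 := Finset.card_sdiff_add_card_eq_card hsub
  omega

open Classical in
lemma autoCorr_eq (d m : ℕ) (f : ℝ → ℂ) (hf1 : f d = 1) (hf0 : ∀ x : ℝ, 1 ≤ |x - d| → f x = 0) :
    autoCorr (Pd d ∩ Set.Icc (-(m : ℝ)) (m : ℝ)) f =
      (((((F_fin d m).toFinset.filter (fun x : ℝ => x - (d:ℝ) ∈ (F_fin d m).toFinset)).card : ℝ) /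
        ((F_fin d m).toFinset.card : ℝ) : ℝ) : ℂ) := by
  unfold autoCorr
  rw [Set.ncard_eq_toFinset_card _ (F_fin d m), finsum_mem_eq_finite_toFinset_sum _ (F_fin d m)]
  have : ∀ x ∈ (F_fin d m).toFinset,
      (∑ᶠ y ∈ (Pd d ∩ Set.Icc (-(m : ℝ)) (m : ℝ)), f (x - y)) =
      if x - d ∈ (F_fin d m).toFinset then 1 else 0 := by
    intro x hx
    rw [finsum_mem_eq_finite_toFinset_sum _ (F_fin d m)]
    rw [← Finset.sum_ite_eq' _ (x - (d:ℝ)) (fun _ => (1:ℂ))]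
    refine Finset.sum_congr rfl fun y hy => ?_
    split_ifs with h
    · rw [h]; simpa using hf1
    · apply hf0
      obtain ⟨a, rfl, -⟩ := PR_int (Pd_PR ((Set.Finite.mem_toFinset _).1 hx).1)
      obtain ⟨b, rfl, -⟩ := PR_int (Pd_PR ((Set.Finite.mem_toFinset _).1 hy).1)
      have h' : b ≠ a - d := fun e => h (by rw [e]; push_cast; rfl)
      have : 1 ≤ |a - b - (d:ℤ)| := Int.one_le_abs (by omega)
      exact_mod_cast this
  rw [Finset.sum_congr rfl this, Finset.sum_boole]
  push_cast
  rw [div_eq_inv_mul]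

lemma card_tendsto (d : ℕ) (hinf : (Pd d).Infinite) (nk : ℕ → ℕ) (hnk : StrictMono nk) :
    Tendsto (fun k => (F_fin d (nk k)).toFinset.card) atTop atTop := by
  refine tendsto_atTop.2 fun N => ?_
  obtain ⟨T, hT, hN⟩ := hinf.exists_subset_card_eq N
  obtain ⟨M, hM⟩ : ∃ M : ℝ, ∀ x ∈ T, |x| ≤ M := by
    obtain ⟨M, hM⟩ := (T.image (fun x => |x|)).bddAbove
    exact ⟨M, fun x hx => hM (by simpa using ⟨x, hx, rfl⟩)⟩
  have := (tendsto_natCast_atTop_atTop (R := ℝ)).comp hnk.tendsto_atTop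
  filter_upwards [this.eventually_ge_atTop M] with k hk
  rw [← hN]
  apply Finset.card_le_card
  intro x hx
  rw [Set.Finite.mem_toFinset]
  exact ⟨hT hx, abs_le.1 ((hM x hx).trans hk)⟩

open Classical in
lemma ratio_tendsto (d : ℕ) (h3 : ¬ (3 ∣ d)) (hinf : (Pd d).Infinite) (nk : ℕ → ℕ)
    (hnk : StrictMono nk) :
    Tendsto (fun k => (((F_fin d (nk k)).toFinset.filter
        (fun x : ℝ => x - (d:ℝ) ∈ (F_fin d (nk k)).toFinset)).card : ℝ) /
        ((F_fin d (nk k)).toFinset.card : ℝ)) atTop (nhds (1/2)) := by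
  have hc := (tendsto_natCast_atTop_atTop (R := ℝ)).comp (card_tendsto d hinf nk hnk)
  have h0 := hc.const_div_atTop (2 * d + 6 : ℝ)
  rw [tendsto_iff_norm_sub_tendsto_zero]
  refine squeeze_zero' (Eventually.of_forall fun _ => norm_nonneg _) ?_ h0
  filter_upwards [hc.eventually_gt_atTop 0] with k hk
  obtain ⟨a, b⟩ := count d h3 (nk k) (F_fin d (nk k)).toFinset
    (fun x => Set.Finite.mem_toFinset _)
  simp only [Function.comp] at hk ⊢
  generalize ((F_fin d (nk k)).toFinset.filter
        (fun x : ℝ => x - (d:ℝ) ∈ (F_fin d (nk k)).toFinset)).card = u at *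
  generalize (F_fin d (nk k)).toFinset.card = s at *
  have a' : (s:ℝ) ≤ 2 * u + (2 * d + 2) := by exact_mod_cast a
  have b' : 2 * (u:ℝ) ≤ s + 6 := by exact_mod_cast b
  have : (u:ℝ) / s - 1/2 = (u - s / 2) / s := by field_simp
  rw [this, norm_div, Real.norm_eq_abs, Real.norm_eq_abs, abs_of_pos hk]
  gcongr
  have : (0:ℝ) ≤ d := by positivity
  rw [abs_le]
  constructor <;> linarith

noncomputable def tent (d : ℕ) (n : ℕ) (x : ℝ) : ℝ := max 0 (1 - (n + 1) * |x - d|)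

lemma tent_cont (d n : ℕ) : Continuous (tent d n) := by unfold tent; fun_prop

lemma tent_zero (d n : ℕ) (x : ℝ) (h : 1 ≤ (n + 1) * |x - d|) : tent d n x = 0 :=
  max_eq_left (by linarith)

lemma tent_zero' (d n : ℕ) (x : ℝ) (h : 1 ≤ |x - d|) : tent d n x = 0 := by
  apply tent_zero
  have : (0:ℝ) ≤ n := by positivity
  nlinarith

lemma tent_self (d n : ℕ) : tent d n d = 1 := by simp [tent]

lemma tent_bound (d n : ℕ) (x : ℝ) :
    ‖tent d n x‖ ≤ (Metric.closedBall (d:ℝ) 1).indicator (fun _ => (1:ℝ)) x := by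
  by_cases h : x ∈ Metric.closedBall (d:ℝ) 1
  · rw [Set.indicator_of_mem h, Real.norm_eq_abs, abs_of_nonneg (le_max_left _ _)]
    apply max_le zero_le_one
    have : 0 ≤ ((n:ℝ) + 1) * |x - d| := by positivity
    linarith
  · rw [Set.indicator_of_notMem h]
    rw [Metric.mem_closedBall, Real.dist_eq, not_le] at h
    rw [tent_zero' d n x h.le]; simp

lemma tent_supp (d n : ℕ) : HasCompactSupport (tent d n) := by
  refine HasCompactSupport.intro (isCompact_closedBall (d:ℝ) 1) fun x h => ?_
  rw [Metric.mem_closedBall, Real.dist_eq, not_le] at h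
  exact tent_zero' d n x h.le

theorem Pd_counting_autocorrelation_at_d (d : ℕ) (hd : 1 ≤ d) (h3 : ¬ (3 ∣ d))
    (hinf : (Pd d).Infinite)
    (nk : ℕ → ℕ) (hnk : StrictMono nk)
    (γ : Measure ℝ) [IsFiniteMeasureOnCompacts γ]
    (hconv : ∀ f : ℝ → ℂ, Continuous f → HasCompactSupport f →
      Tendsto (fun k => autoCorr (Pd d ∩ Set.Icc (-(nk k : ℝ)) ((nk k : ℝ))) f) atTop
        (nhds (∫ x, f x ∂γ))) :
    γ {(d : ℝ)} = 1/2 ∧ γ ≠ Measure.dirac (0 : ℝ) := by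
  have hint : ∀ n, ∫ x, tent d n x ∂γ = 1 / 2 := by
    intro n
    have h1 := hconv (fun x => (tent d n x : ℂ))
      (Complex.continuous_ofReal.comp (tent_cont d n))
      ((tent_supp d n).comp_left (g := Complex.ofReal) Complex.ofReal_zero)
    rw [integral_complex_ofReal] at h1
    have h2 := (Complex.continuous_ofReal.tendsto _).comp (ratio_tendsto d h3 hinf nk hnk)
    refine Complex.ofReal_injective (tendsto_nhds_unique h1 (h2.congr fun k => ?_))
    rw [autoCorr_eq d (nk k) _ (by simp [tent_self])
      (fun x hx => by simp [tent_zero' d n x hx])]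
    rfl
  have hlim : Tendsto (fun n => ∫ x, tent d n x ∂γ) atTop
      (nhds (∫ x, ({(d:ℝ)} : Set ℝ).indicator (fun _ => (1:ℝ)) x ∂γ)) := by
    refine tendsto_integral_of_dominated_convergence
      ((Metric.closedBall (d:ℝ) 1).indicator (fun _ => (1:ℝ)))
      (fun n => (tent_cont d n).aestronglyMeasurable) ?_
      (fun n => Eventually.of_forall fun x => tent_bound d n x) (Eventually.of_forall fun x => ?_)
    · exact (integrable_indicator_iff measurableSet_closedBall).2
        (integrableOn_const (isCompact_closedBall _ _).measure_lt_top.ne)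
    · by_cases h : x = d
      · subst h
        simp [tent_self]
      · rw [Set.indicator_of_notMem (by simpa using h)]
        have hp : 0 < |x - d| := abs_pos.2 (sub_ne_zero.2 h)
        refine tendsto_const_nhds.congr' ?_
        have ht := (tendsto_natCast_atTop_atTop (R := ℝ)).atTop_mul_const hp
        filter_upwards [ht.eventually_ge_atTop 1] with n hn
        exact (tent_zero d n x (by linarith)).symm
  simp only [hint] at hlim
  have hreal := tendsto_nhds_unique hlim tendsto_const_nhds
  rw [integral_indicator_const _ (measurableSet_singleton _)] at hreal
  have hγ : γ {(d:ℝ)} = 1 / 2 := by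
    have hfin : γ {(d:ℝ)} ≠ ⊤ := isCompact_singleton.measure_lt_top.ne
    rw [← ENNReal.toReal_eq_toReal_iff' hfin (by simp)]
    simpa [Measure.real] using hreal
  refine ⟨hγ, fun h => ?_⟩
  rw [h, Measure.dirac_apply' _ (measurableSet_singleton _), Set.indicator_of_notMem] at hγ
  · have := congrArg ENNReal.toReal hγ
    norm_num at this
  · simp only [Set.mem_singleton_iff]
    intro e
    have : d = 0 := by exact_mod_cast e.symm
    omega
end

section
/- Let d ≥ 1 be an integer and assume ℙ_d is nonempty and finite. Then, writing F_n = ℙ_d ∩ [−n, n], for every continuous compactly supported f : ℝ → ℂ one has (1/card F_n)·Σ_{x,y∈F_n} f(x−y) → (1/card ℙ_d)·Σ_{p,q∈ℙ_d} f(p−q) as n → ∞; moreover the limit measure γ = (1/card ℙ_d)·Σ_{p,q∈ℙ_d} δ_{p−q} satisfies γ({d}) ≥ 1/2, with equality if and only if there is no p such that p, p+d and p+2d all lie in ℙ. -/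
open Filter Topology Set MeasureTheory ENNReal

/-- The autocorrelation measure `γ = (1 / card ℙ_d) ∑_{p,q ∈ ℙ_d} δ_{p - q}`. -/
noncomputable def gammaPd (d : ℕ) : Measure ℝ :=
  (((Pd d).ncard : ℝ≥0∞))⁻¹ • ∑ᶠ p ∈ Pd d, ∑ᶠ q ∈ Pd d, Measure.dirac (p - q)

lemma aux_gamma (d : ℕ) (hfin : (Pd d).Finite) (A : Finset ℝ)
    (hA : ∀ x, x ∈ A ↔ x ∈ PrimesR ∧ x + d ∈ PrimesR) :
    gammaPd d {(d : ℝ)} = ((Pd d).ncard : ℝ≥0∞)⁻¹ * (A.card : ℝ≥0∞) := by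
  classical
  unfold gammaPd
  rw [Measure.smul_apply, smul_eq_mul]
  congr 1
  rw [finsum_mem_eq_finite_toFinset_sum _ hfin]
  simp_rw [finsum_mem_eq_finite_toFinset_sum _ hfin]
  simp only [Measure.finsetSum_apply]
  rw [Finset.sum_comm]
  have h1 : ∀ q ∈ hfin.toFinset, ∑ p ∈ hfin.toFinset,
      (Measure.dirac (p - q) : Measure ℝ) {(d : ℝ)} = if q ∈ A then 1 else 0 := by
    intro q hq
    have h2 : ∀ p ∈ hfin.toFinset, (Measure.dirac (p - q) : Measure ℝ) {(d : ℝ)}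
        = if p = q + d then 1 else 0 := by
      intro p _
      rw [Measure.dirac_apply' _ (measurableSet_singleton _)]
      by_cases h : p = q + d
      · simp [h]
      · have : p - q ≠ d := fun h' => h (by linarith)
        simp [h, this]
    rw [Finset.sum_congr rfl h2, Finset.sum_ite_eq']
    congr 1
    rw [hfin.mem_toFinset] at hq ⊢
    rw [hA]
    simp only [Pd, mem_setOf_eq, add_sub_cancel_right] at hq ⊢
    apply propext
    tauto
  rw [Finset.sum_congr rfl h1, ← Finset.sum_filter, Finset.sum_const, nsmul_eq_mul, mul_one]
  congr 2
  ext x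
  simp only [Finset.mem_filter, Finite.mem_toFinset, and_iff_right_iff_imp]
  intro h
  exact Or.inl ((hA x).1 h)

theorem Pd_finite_counting_autocorrelation (d : ℕ) (hd : 1 ≤ d)
    (hne : (Pd d).Nonempty) (hfin : (Pd d).Finite) :
    (∀ f : ℝ → ℂ, Continuous f → HasCompactSupport f →
      Tendsto (fun n : ℕ => autoCorr (Pd d ∩ Set.Icc (-(n : ℝ)) (n : ℝ)) f) atTop
        (nhds (((Pd d).ncard : ℂ)⁻¹ * ∑ᶠ p ∈ Pd d, ∑ᶠ q ∈ Pd d, f (p - q)))) ∧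
    (1/2 : ℝ≥0∞) ≤ gammaPd d {(d : ℝ)} ∧
    (gammaPd d {(d : ℝ)} = 1/2 ↔
      ¬ ∃ p : ℝ, p ∈ PrimesR ∧ p + d ∈ PrimesR ∧ p + 2 * d ∈ PrimesR) := by
  classical
  refine ⟨?_, ?_⟩
  · intro f _ _
    obtain ⟨R, hR⟩ := hfin.isBounded.exists_norm_le
    apply tendsto_const_nhds.congr'
    filter_upwards [eventually_ge_atTop ⌈R⌉₊] with n hn
    have : Pd d ∩ Set.Icc (-(n : ℝ)) (n : ℝ) = Pd d := by
      apply inter_eq_left.2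
      intro x hx
      have h1 := hR x hx
      have h2 : R ≤ n := Nat.ceil_le.1 hn
      exact abs_le.1 (h1.trans h2)
    rw [this, autoCorr]
  · have hAf : {x : ℝ | x ∈ PrimesR ∧ x + d ∈ PrimesR}.Finite :=
      hfin.subset fun x hx => Or.inl hx
    set A := hAf.toFinset with hAdef
    have hA : ∀ x, x ∈ A ↔ x ∈ PrimesR ∧ x + d ∈ PrimesR := by simp [hAdef]
    set B := A.image (fun x => x + (d : ℝ)) with hBdef
    have hB : ∀ x, x ∈ B ↔ x - d ∈ PrimesR ∧ x ∈ PrimesR := by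
      intro x
      rw [hBdef, Finset.mem_image]
      constructor
      · rintro ⟨a, ha, rfl⟩
        simpa using (hA a).1 ha
      · intro h
        exact ⟨x - d, (hA _).2 (by simpa using h), by ring⟩
    have hBc : B.card = A.card := Finset.card_image_of_injective _ (add_left_injective _)
    have hS : hfin.toFinset = A ∪ B := by
      ext x
      rw [hfin.mem_toFinset, Finset.mem_union, hA, hB]
      rfl
    have hN : (Pd d).ncard = (A ∪ B).card := by
      rw [← hS, Set.ncard_eq_toFinset_card _ hfin]
    have hc := Finset.card_union_add_card_inter A B
    have hpos : 0 < (Pd d).ncard := (Set.ncard_pos hfin).2 hne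
    have hI : (A ∩ B).card = 0 ↔
        ¬ ∃ p : ℝ, p ∈ PrimesR ∧ p + d ∈ PrimesR ∧ p + 2 * d ∈ PrimesR := by
      rw [Finset.card_eq_zero, Finset.eq_empty_iff_forall_notMem, not_exists]
      constructor
      · rintro h p ⟨h1, h2, h3⟩
        apply h (p + d)
        rw [Finset.mem_inter, hA, hB]
        refine ⟨⟨h2, ?_⟩, ?_, h2⟩
        · convert h3 using 1
          ring
        · simpa using h1
      · intro h x hx
        rw [Finset.mem_inter, hA, hB] at hx
        apply h (x - d)
        refine ⟨hx.2.1, by simpa using hx.1.1, ?_⟩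
        convert hx.1.2 using 1
        ring
    have hposR : (0 : ℝ) < (Pd d).ncard := by exact_mod_cast hpos
    have hg : gammaPd d {(d : ℝ)} = ENNReal.ofReal ((A.card : ℝ) / (Pd d).ncard) := by
      rw [aux_gamma d hfin A hA, ENNReal.ofReal_div_of_pos hposR, ENNReal.ofReal_natCast,
        ENNReal.ofReal_natCast, mul_comm, ENNReal.div_eq_inv_mul, mul_comm]
    have hh : (1 / 2 : ℝ≥0∞) = ENNReal.ofReal (1 / 2 : ℝ) := by
      rw [ENNReal.ofReal_div_of_pos two_pos]
      simp
    have hcR : ((Pd d).ncard : ℝ) + (A ∩ B).card = A.card + A.card := by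
      rw [hBc, ← hN] at hc
      exact_mod_cast hc
    have hnn : (0 : ℝ) ≤ (A.card : ℝ) / (Pd d).ncard := by positivity
    have hi : (0 : ℝ) ≤ (A ∩ B).card := by positivity
    rw [hg, hh, ← hI]
    constructor
    · rw [ENNReal.ofReal_le_ofReal_iff hnn, div_le_div_iff₀ two_pos hposR]
      linarith
    · rw [ENNReal.ofReal_eq_ofReal_iff hnn (by norm_num), div_eq_div_iff hposR.ne' two_ne_zero,
        ← Nat.cast_eq_zero (R := ℝ)]
      constructor <;> intro h <;> linarith
end

section
/- Let (a_n)_{n∈ℕ} be a sequence of real numbers with a_{n+1} − a_n → ∞, and let Λ = {a_n : n ∈ ℕ} ⊆ ℝ. Then Λ has finite local complexity, and for every van Hove sequence (A_n) in ℝ with card(Λ ∩ A_n) → ∞, writing F_n = Λ ∩ A_n, the counting autocorrelation of Λ with respect to (A_n) exists and equals δ_0: for every continuous compactly supported f : ℝ → ℂ, (1/card F_n)·Σ_{x,y∈F_n} f(x−y) → f(0) as n → ∞. -/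
open Filter Topology Set MeasureTheory Pointwise

/-- The `K`-boundary `∂^K A = ((A + K) \ A°) ∪ ((closure(Aᶜ) − K) ∩ A)`. -/
def KBoundary (K A : Set ℝ) : Set ℝ :=
  ((A + K) \ interior A) ∪ ((closure Aᶜ - K) ∩ A)

/-- A van Hove sequence in `ℝ` (with respect to Lebesgue measure): a sequence of
compact sets of positive measure whose `K`-boundaries are asymptotically negligible
for every compact `K`. -/
def IsVanHove (A : ℕ → Set ℝ) : Prop :=
  (∀ n, IsCompact (A n)) ∧ (∀ n, 0 < volume (A n)) ∧
    ∀ K : Set ℝ, IsCompact K →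
      Tendsto (fun n => volume (KBoundary K (A n)) / volume (A n)) atTop (nhds 0)

lemma sparse_pairs_finite (a : ℕ → ℝ) (hgap : Tendsto (fun n => a (n + 1) - a n) atTop atTop)
    (R : ℝ) (hR : 0 ≤ R) :
    {p : ℝ × ℝ | p.1 ∈ Set.range a ∧ p.2 ∈ Set.range a ∧ p.1 ≠ p.2 ∧ |p.1 - p.2| ≤ R}.Finite := by
  obtain ⟨N, hN⟩ := eventually_atTop.1 (hgap.eventually_ge_atTop (R + 1))
  have grow : ∀ k, N ≤ k → ∀ d : ℕ, a k + d * (R + 1) ≤ a (k + d) := by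
    intro k hk d
    induction d with
    | zero => simp
    | succ d ih =>
      have := hN (k + d) (by omega)
      push_cast
      rw [← add_assoc]
      linarith
  have hlim : Tendsto (fun d : ℕ => a (N + d)) atTop atTop := by
    refine tendsto_atTop_mono (f := fun d : ℕ => a N + (d : ℝ) * (R + 1)) (grow N le_rfl) ?_
    exact tendsto_atTop_add_const_left _ _
      (tendsto_natCast_atTop_atTop.atTop_mul_const (by linarith))
  have hev : ∀ᶠ d : ℕ in atTop, ∀ k ∈ Finset.range N, a k + R < a (N + d) := by
    rw [Filter.eventually_all_finset]
    intro k _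
    exact hlim.eventually_gt_atTop _
  obtain ⟨D, hD⟩ := eventually_atTop.1 hev
  have key : ∀ k m, k < m → N + D ≤ m → a k + R < a m := by
    intro k m hkm hm
    by_cases hk : k < N
    · have := hD (m - N) (by omega) k (Finset.mem_range.2 hk)
      rwa [show N + (m - N) = m by omega] at this
    · have := grow k (by omega) (m - k)
      rw [show k + (m - k) = m by omega] at this
      have h1 : (1 : ℝ) ≤ ((m - k : ℕ) : ℝ) := by exact_mod_cast (by omega : 1 ≤ m - k)
      nlinarith
  refine (((Set.finite_Iio (N + D)).prod (Set.finite_Iio (N + D))).image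
    (fun q : ℕ × ℕ => (a q.1, a q.2))).subset ?_
  rintro ⟨x, y⟩ ⟨⟨i, rfl⟩, ⟨j, rfl⟩, hne, hle⟩
  refine ⟨(i, j), ?_, rfl⟩
  simp only at hne hle
  rw [abs_le] at hle
  rcases lt_trichotomy i j with h | h | h
  · have : j < N + D := by
      by_contra hc
      have := key i j h (by omega)
      linarith
    exact ⟨Set.mem_Iio.2 (by simp only; omega), Set.mem_Iio.2 this⟩
  · exact absurd (by rw [h]) hne
  · have : i < N + D := by
      by_contra hc
      have := key j i h (by omega)
      linarith
    exact ⟨Set.mem_Iio.2 this, Set.mem_Iio.2 (by simp only; omega)⟩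

lemma sparse_bound (K : Set ℝ) (hK : IsCompact K) : ∃ R : ℝ, 0 ≤ R ∧ ∀ x ∈ K, |x| ≤ R := by
  obtain ⟨R, hR⟩ := hK.isBounded.exists_norm_le
  exact ⟨max R 0, le_max_right _ _, fun x hx => (hR x hx).trans (le_max_left _ _)⟩

theorem sparse_sequence_counting_autocorrelation
    (a : ℕ → ℝ) (hgap : Tendsto (fun n => a (n + 1) - a n) atTop atTop) :
    (∀ K : Set ℝ, IsCompact K → ((Set.range a - Set.range a) ∩ K).Finite) ∧
    ∀ A : ℕ → Set ℝ, IsVanHove A →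
      Tendsto (fun n => (Set.range a ∩ A n).ncard) atTop atTop →
      ∀ f : ℝ → ℂ, Continuous f → HasCompactSupport f →
        Tendsto (fun n => autoCorr (Set.range a ∩ A n) f) atTop (nhds (f 0)) := by
  constructor
  · intro K hK
    obtain ⟨R, hR0, hR⟩ := sparse_bound K hK
    refine (((sparse_pairs_finite a hgap R hR0).image (fun p => p.1 - p.2)).insert 0).subset ?_
    rintro z ⟨hz, hzK⟩
    obtain ⟨x, hx, y, hy, rfl⟩ := Set.mem_sub.1 hz
    by_cases h : x = y
    · left; simp [h]
    · right
      exact ⟨(x, y), ⟨hx, hy, h, hR _ hzK⟩, rfl⟩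
  · intro A _ hcard f _ hf
    obtain ⟨R, hR0, hR⟩ := sparse_bound _ hf
    have hP := sparse_pairs_finite a hgap R hR0
    set B : ℝ := ∑ p ∈ hP.toFinset, ‖f (p.1 - p.2)‖ with hB
    have hbound : ∀ᶠ n in atTop, ‖autoCorr (Set.range a ∩ A n) f - f 0‖
        ≤ (((Set.range a ∩ A n).ncard : ℕ) : ℝ)⁻¹ * B := by
      filter_upwards [hcard.eventually_ge_atTop 1] with n hn
      have hfin : (Set.range a ∩ A n).Finite := Set.finite_of_ncard_pos hn
      obtain ⟨s, hs⟩ := hfin.exists_finset_coe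
      have hmem : ∀ x ∈ s, x ∈ Set.range a := fun x hx =>
        (hs ▸ (Finset.mem_coe.2 hx) : x ∈ Set.range a ∩ A n).1
      rw [← hs] at hn ⊢
      rw [Set.ncard_coe_finset] at hn ⊢
      have hc : (s.card : ℂ) ≠ 0 := by
        exact_mod_cast (by omega : s.card ≠ 0)
      have hsum : autoCorr (s : Set ℝ) f - f 0
          = (s.card : ℂ)⁻¹ * ∑ p ∈ s.offDiag, f (p.1 - p.2) := by
        unfold autoCorr
        rw [Set.ncard_coe_finset, finsum_mem_coe_finset]
        simp_rw [finsum_mem_coe_finset]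
        rw [← Finset.sum_product' s s (fun x y => f (x - y)), ← Finset.diag_union_offDiag,
          Finset.sum_union (Finset.disjoint_diag_offDiag s), Finset.sum_diag]
        simp only [sub_self, Finset.sum_const, nsmul_eq_mul]
        field_simp
        ring
      rw [hsum, norm_mul, norm_inv, Complex.norm_natCast]
      refine mul_le_mul_of_nonneg_left ?_ (by positivity)
      refine (norm_sum_le _ _).trans ?_
      rw [← Finset.sum_filter_ne_zero]
      refine Finset.sum_le_sum_of_subset_of_nonneg ?_ (fun _ _ _ => norm_nonneg _)
      intro p hp
      rw [Finset.mem_filter, Finset.mem_offDiag] at hp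
      obtain ⟨⟨h1, h2, h3⟩, h4⟩ := hp
      rw [Set.Finite.mem_toFinset]
      exact ⟨hmem _ h1, hmem _ h2, h3, hR _ (subset_tsupport f (norm_ne_zero_iff.1 h4))⟩
    rw [tendsto_iff_norm_sub_tendsto_zero]
    refine squeeze_zero' (Eventually.of_forall fun _ => norm_nonneg _) hbound ?_
    have := ((tendsto_inv_atTop_zero (𝕜 := ℝ)).comp
      (tendsto_natCast_atTop_atTop.comp hcard)).mul_const B
    simpa [Function.comp_def] using this
end

section
/- Let Λ ⊆ ℝ be uniformly discrete and let A_n = [a_n, b_n] be compact intervals with b_n − a_n → ∞ such that card(F_n) → ∞, where F_n = Λ ∩ A_n. Then for every t ∈ ℝ, (card(Λ ∩ (−t + Λ) ∩ A_n) − card(F_n ∩ (−t + F_n)))/card(F_n) → 0 as n → ∞. -/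
open Filter Topology Set

/-- A set `Λ ⊆ ℝ` is uniformly discrete if distinct points are separated by at least
some fixed `r > 0`. -/
def UnifDiscR (Λ : Set ℝ) : Prop :=
  ∃ r : ℝ, 0 < r ∧ ∀ x ∈ Λ, ∀ y ∈ Λ, x ≠ y → r ≤ |x - y|

theorem unifDisc_window_aux (Λ : Set ℝ) (r : ℝ) (hr : 0 < r)
    (h : ∀ x ∈ Λ, ∀ y ∈ Λ, x ≠ y → r ≤ |x - y|) (c l : ℝ) :
    (Λ ∩ Set.Icc c (c + l)).Finite ∧
      (Λ ∩ Set.Icc c (c + l)).ncard ≤ ⌊l / r⌋₊ + 1 := by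
  have hmaps : ∀ x ∈ Λ ∩ Set.Icc c (c + l), ⌊(x - c) / r⌋₊ ∈
      (↑(Finset.range (⌊l / r⌋₊ + 1)) : Set ℕ) := by
    rintro x ⟨_, h1, h2⟩
    simp only [Finset.coe_range, Set.mem_Iio]
    apply Nat.lt_succ_of_le
    apply Nat.floor_le_floor
    apply div_le_div_of_nonneg_right _ hr.le
    linarith
  have hinj : Set.InjOn (fun x : ℝ => ⌊(x - c) / r⌋₊) (Λ ∩ Set.Icc c (c + l)) := by
    rintro x ⟨hx, hx1, hx2⟩ y ⟨hy, hy1, hy2⟩ hxy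
    by_contra hne
    have hsep := h x hx y hy hne
    simp only at hxy
    have e1 := Nat.floor_le (div_nonneg (sub_nonneg.2 hx1) hr.le)
    have e2 := Nat.floor_le (div_nonneg (sub_nonneg.2 hy1) hr.le)
    have e3 := Nat.lt_floor_add_one ((x - c) / r)
    have e4 := Nat.lt_floor_add_one ((y - c) / r)
    rw [hxy] at e1 e3
    rw [le_div_iff₀ hr] at e1 e2
    rw [div_lt_iff₀ hr] at e3 e4
    have : |x - y| < r := by
      rw [abs_lt]
      constructor <;> linarith
    linarith
  refine ⟨Set.Finite.of_injOn hmaps hinj (Finset.finite_toSet _), ?_⟩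
  have := Set.ncard_le_ncard_of_injOn _ hmaps hinj (Finset.finite_toSet _)
  rwa [Set.ncard_coe_finset, Finset.card_range] at this

theorem counting_autocorrelation_window_comparison
    (Λ : Set ℝ) (hΛ : UnifDiscR Λ) (a b : ℕ → ℝ)
    (hw : Tendsto (fun n => b n - a n) atTop atTop)
    (hcard : Tendsto (fun n => (Λ ∩ Set.Icc (a n) (b n)).ncard) atTop atTop) :
    ∀ t : ℝ,
      Tendsto (fun n =>
          ((({x | x ∈ Λ ∧ t + x ∈ Λ} ∩ Set.Icc (a n) (b n)).ncard : ℝ) -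
            ({x | x ∈ Λ ∩ Set.Icc (a n) (b n) ∧
              t + x ∈ Λ ∩ Set.Icc (a n) (b n)}.ncard : ℝ)) /
          ((Λ ∩ Set.Icc (a n) (b n)).ncard : ℝ)) atTop (nhds 0) := by
  obtain ⟨r, hr, h⟩ := hΛ
  intro t
  have hcr : Tendsto (fun n => ((Λ ∩ Set.Icc (a n) (b n)).ncard : ℝ)) atTop atTop :=
    tendsto_natCast_atTop_atTop.comp hcard
  have hlim := hcr.const_div_atTop (((⌊|t| / r⌋₊ + 1) + (⌊|t| / r⌋₊ + 1) : ℕ) : ℝ)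
  refine tendsto_of_tendsto_of_tendsto_of_le_of_le tendsto_const_nhds hlim ?_ ?_
  all_goals
    intro n
    have hfin : (Λ ∩ Set.Icc (a n) (b n)).Finite := by
      have := (unifDisc_window_aux Λ r hr h (a n) (b n - a n)).1
      rwa [add_sub_cancel] at this
    have hS : ({x | x ∈ Λ ∧ t + x ∈ Λ} ∩ Set.Icc (a n) (b n)).Finite :=
      hfin.subset (fun x hx => ⟨hx.1.1, hx.2⟩)
    have hTS : {x | x ∈ Λ ∩ Set.Icc (a n) (b n) ∧ t + x ∈ Λ ∩ Set.Icc (a n) (b n)} ⊆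
        {x | x ∈ Λ ∧ t + x ∈ Λ} ∩ Set.Icc (a n) (b n) :=
      fun x hx => ⟨⟨hx.1.1, hx.2.1⟩, hx.1.2⟩
    have hT := hS.subset hTS
  · apply div_nonneg _ (Nat.cast_nonneg _)
    rw [sub_nonneg]
    exact Nat.cast_le.2 (Set.ncard_le_ncard hTS hS)
  · apply div_le_div_of_nonneg_right _ (Nat.cast_nonneg _)
    obtain ⟨f1, c1⟩ := unifDisc_window_aux Λ r hr h (a n) |t|
    obtain ⟨f2, c2⟩ := unifDisc_window_aux Λ r hr h (b n - |t|) |t|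
    have hsub : {x | x ∈ Λ ∧ t + x ∈ Λ} ∩ Set.Icc (a n) (b n) ⊆
        {x | x ∈ Λ ∩ Set.Icc (a n) (b n) ∧ t + x ∈ Λ ∩ Set.Icc (a n) (b n)} ∪
        (Λ ∩ Set.Icc (a n) (a n + |t|) ∪ Λ ∩ Set.Icc (b n - |t|) (b n - |t| + |t|)) := by
      rintro x ⟨⟨hx, htx⟩, h1, h2⟩
      have k1 := le_abs_self t
      have k2 := neg_abs_le t
      by_cases q1 : a n ≤ t + x
      · by_cases q2 : t + x ≤ b n
        · exact Or.inl ⟨⟨hx, h1, h2⟩, htx, q1, q2⟩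
        · exact Or.inr (Or.inr ⟨hx, by linarith, by linarith⟩)
      · exact Or.inr (Or.inl ⟨hx, by linarith, by linarith⟩)
    have m1 := Set.ncard_le_ncard hsub (hT.union (f1.union f2))
    have m2 := m1.trans (Set.ncard_union_le _ _)
    have m3 := Set.ncard_union_le (Λ ∩ Set.Icc (a n) (a n + |t|))
      (Λ ∩ Set.Icc (b n - |t|) (b n - |t| + |t|))
    rw [sub_le_iff_le_add']
    rw [← Nat.cast_add]
    refine Nat.cast_le.2 ?_
    omega
end

section
/- Let A_n = [a_n, b_n] be compact intervals in ℝ with b_n − a_n → ∞, and let Λ ⊆ ℝ be uniformly discrete with card(Λ ∩ A_n) → ∞, such that the counting autocorrelation of Λ with respect to (A_n) exists and equals δ_0 (i.e., writing F_n = Λ ∩ A_n, for every continuous compactly supported f : ℝ → ℂ, (1/card F_n)·Σ_{x,y∈F_n} f(x−y) → f(0)). Then for every nonzero integer k, the set Γ = Λ ∪ (k + Λ) has counting autocorrelation δ_0 + (δ_k + δ_{−k})/2 with respect to (A_n): writing E_n = Γ ∩ A_n, for every continuous compactly supported f : ℝ → ℂ, (1/card E_n)·Σ_{x,y∈E_n}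 f(x−y) → f(0) + (f(k) + f(−k))/2 as n → ∞. -/
open Filter Topology Set

lemma aux_window (S : Set ℝ) (r : ℝ) (hr : 0 < r)
    (hS : ∀ x ∈ S, ∀ y ∈ S, x ≠ y → r ≤ |x - y|) (L : ℝ) :
    ∃ C : ℕ, ∀ p : ℝ, (S ∩ Set.Icc p (p + L)).Finite ∧ (S ∩ Set.Icc p (p + L)).ncard ≤ C := by
  refine ⟨(Finset.Icc (0:ℤ) ⌊L / r⌋).card, fun p => ?_⟩
  have hm : ∀ x ∈ S ∩ Set.Icc p (p + L),
      ⌊(x - p) / r⌋ ∈ ((Finset.Icc (0:ℤ) ⌊L / r⌋ : Finset ℤ) : Set ℤ) := by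
    rintro x ⟨_, h1, h2⟩
    rw [Finset.mem_coe, Finset.mem_Icc]
    refine ⟨Int.floor_nonneg.2 (div_nonneg (by linarith) hr.le), Int.floor_le_floor ?_⟩
    gcongr
    linarith
  have hi : Set.InjOn (fun x : ℝ => ⌊(x - p) / r⌋) (S ∩ Set.Icc p (p + L)) := by
    intro x hx y hy hxy
    by_contra hne
    have h1 := hS x hx.1 y hy.1 hne
    have h2 := Int.abs_sub_lt_one_of_floor_eq_floor hxy
    rw [← sub_div, abs_div, abs_of_pos hr, div_lt_one hr] at h2
    have : x - p - (y - p) = x - y := by ring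
    rw [this] at h2
    linarith
  refine ⟨Set.Finite.of_injOn hm hi (Finset.finite_toSet _), ?_⟩
  have := Set.ncard_le_ncard_of_injOn _ hm hi (Finset.finite_toSet _)
  rwa [Set.ncard_coe_finset] at this

lemma aux_shift (S : Set ℝ) (r k : ℝ)
    (hS : ∀ x ∈ S, ∀ y ∈ S, x ≠ y → r ≤ |x - y|) :
    ∀ x ∈ (fun x => k + x) '' S, ∀ y ∈ (fun x => k + x) '' S, x ≠ y → r ≤ |x - y| := by
  rintro _ ⟨x, hx, rfl⟩ _ ⟨y, hy, rfl⟩ hne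
  have := hS x hx y hy (by rintro rfl; exact hne rfl)
  simpa using this

lemma aux_incl (F K E : Finset ℝ) (g : ℝ → ℂ) (c : ℝ) (hg : ∀ x, ‖g x‖ ≤ c) :
    ‖∑ x ∈ E, g x - (∑ x ∈ F, g x + ∑ x ∈ K, g x)‖ ≤
      (((F ∩ K).card : ℝ) + ((F ∪ K) \ E).card + (E \ (F ∪ K)).card) * c := by
  have hb : ∀ A : Finset ℝ, ‖∑ x ∈ A, g x‖ ≤ A.card * c := fun A => by
    have := norm_sum_le_of_le A (fun x _ => hg x)
    simpa using this
  have h1 := Finset.sum_union_inter (s₁ := F) (s₂ := K) (f := g)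
  have h2 := Finset.sum_sdiff_sub_sum_sdiff (s₁ := E) (s₂ := F ∪ K) (f := g)
  have h3 : ∑ x ∈ E, g x - (∑ x ∈ F, g x + ∑ x ∈ K, g x) =
     ∑ x ∈ E \ (F ∪ K), g x - ∑ x ∈ (F ∪ K) \ E, g x - ∑ x ∈ F ∩ K, g x := by
    linear_combination h1 + h2
  rw [h3]
  have e1 := norm_sub_le (∑ x ∈ E \ (F ∪ K), g x - ∑ x ∈ (F ∪ K) \ E, g x) (∑ x ∈ F ∩ K, g x)
  have e2 := norm_sub_le (∑ x ∈ E \ (F ∪ K), g x) (∑ x ∈ (F ∪ K) \ E, g x)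
  linarith [hb (E \ (F ∪ K)), hb ((F ∪ K) \ E), hb (F ∩ K)]

lemma aux_core (F K E : Finset ℝ) (f : ℝ → ℂ) (c : ℝ)
    (hE : ∀ x, ‖∑ y ∈ E, f (x - y)‖ ≤ c)
    (hF : ∀ x, ‖∑ y ∈ F, f (y - x)‖ ≤ c)
    (hK : ∀ x, ‖∑ y ∈ K, f (y - x)‖ ≤ c) :
    ‖∑ x ∈ E, ∑ y ∈ E, f (x - y) - (∑ x ∈ F, ∑ y ∈ F, f (x - y) + ∑ x ∈ F, ∑ y ∈ K, f (x - y)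
      + ∑ x ∈ K, ∑ y ∈ F, f (x - y) + ∑ x ∈ K, ∑ y ∈ K, f (x - y))‖ ≤
      (((F ∩ K).card : ℝ) + ((F ∪ K) \ E).card + (E \ (F ∪ K)).card) * (3 * c) := by
  have h1 := aux_incl F K E _ c hE
  have h2 := aux_incl F K E _ c hF
  have h3 := aux_incl F K E _ c hK
  rw [Finset.sum_comm (s := E) (t := F), Finset.sum_comm (s := F) (t := F),
    Finset.sum_comm (s := K) (t := F)] at h2
  rw [Finset.sum_comm (s := E) (t := K), Finset.sum_comm (s := F) (t := K),
    Finset.sum_comm (s := K) (t := K)] at h3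
  have := norm_add₃_le (a := ∑ x ∈ E, ∑ y ∈ E, f (x - y) -
      (∑ x ∈ F, ∑ y ∈ E, f (x - y) + ∑ x ∈ K, ∑ y ∈ E, f (x - y)))
    (b := ∑ x ∈ F, ∑ y ∈ E, f (x - y) -
      (∑ x ∈ F, ∑ y ∈ F, f (x - y) + ∑ x ∈ F, ∑ y ∈ K, f (x - y)))
    (c := ∑ x ∈ K, ∑ y ∈ E, f (x - y) -
      (∑ x ∈ K, ∑ y ∈ F, f (x - y) + ∑ x ∈ K, ∑ y ∈ K, f (x - y)))
  refine le_trans (le_of_eq ?_) (this.trans ?_)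
  · congr 1; ring
  · linarith

lemma aux_auto (F : Finset ℝ) (f : ℝ → ℂ) :
    autoCorr (F : Set ℝ) f = (F.card : ℂ)⁻¹ * ∑ x ∈ F, ∑ y ∈ F, f (x - y) := by
  unfold autoCorr
  rw [Set.ncard_coe_finset]
  congr 1
  have : ∀ g : ℝ → ℂ, ∑ᶠ x ∈ (F : Set ℝ), g x = ∑ x ∈ F, g x := fun g =>
    finsum_mem_coe_finset g F
  rw [this]
  exact Finset.sum_congr rfl fun x _ => this _

lemma aux_bound (S : Set ℝ) (f : ℝ → ℂ) (hf : Continuous f) (hc : HasCompactSupport f)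
    (hS : ∀ L : ℝ, ∃ C : ℕ, ∀ p : ℝ, (S ∩ Set.Icc p (p + L)).Finite ∧
      (S ∩ Set.Icc p (p + L)).ncard ≤ C) :
    ∃ c : ℝ, ∀ B : Finset ℝ, (B : Set ℝ) ⊆ S → ∀ x,
      ‖∑ y ∈ B, f (x - y)‖ ≤ c ∧ ‖∑ y ∈ B, f (y - x)‖ ≤ c := by
  obtain ⟨M, hM⟩ := hc.exists_bound_of_continuous hf
  obtain ⟨R, hR⟩ := hc.isCompact.isBounded.subset_closedBall 0
  obtain ⟨C, hC⟩ := hS (2 * R)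
  have hM0 : 0 ≤ M := (norm_nonneg _).trans (hM 0)
  have h0 : ∀ t, R < |t| → f t = 0 := by
    intro t ht
    by_contra h
    have := hR (subset_tsupport f h)
    simp at this
    linarith
  have key : ∀ B : Finset ℝ, (B : Set ℝ) ⊆ S → ∀ x, ∀ g : ℝ → ℂ, (∀ y, ‖g y‖ ≤ M) →
      (∀ y, R < |x - y| → g y = 0) → ‖∑ y ∈ B, g y‖ ≤ C * M := by
    intro B hB x g hg hg0
    rw [← Finset.sum_filter_of_ne (p := fun y => |x - y| ≤ R)
      (fun y _ hy => not_lt.1 fun h => hy (hg0 y h))]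
    have h1 := norm_sum_le_of_le (B.filter (fun y => |x - y| ≤ R)) (fun y _ => hg y)
    have h2 : (B.filter (fun y => |x - y| ≤ R)).card ≤ C := by
      refine le_trans ?_ (hC (x - R)).2
      rw [← Set.ncard_coe_finset]
      refine Set.ncard_le_ncard ?_ (hC (x - R)).1
      intro y hy
      simp only [Finset.coe_filter, Set.mem_ofPred_eq, abs_le] at hy
      exact ⟨hB hy.1, by constructor <;> linarith [hy.2.1, hy.2.2]⟩
    rw [Finset.sum_const, nsmul_eq_mul] at h1
    refine h1.trans ?_
    gcongr
  refine ⟨C * M, fun B hB x => ⟨key B hB x _ (fun y => hM _) (fun y h => h0 _ h),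
    key B hB x _ (fun y => hM _) (fun y h => h0 _ ?_)⟩⟩
  rwa [abs_sub_comm]

theorem counting_autocorrelation_of_union_with_shift
    (Λ : Set ℝ) (hΛ : UnifDiscR Λ) (a b : ℕ → ℝ)
    (hw : Tendsto (fun n => b n - a n) atTop atTop)
    (hcard : Tendsto (fun n => (Λ ∩ Set.Icc (a n) (b n)).ncard) atTop atTop)
    (hauto : ∀ f : ℝ → ℂ, Continuous f → HasCompactSupport f →
      Tendsto (fun n => autoCorr (Λ ∩ Set.Icc (a n) (b n)) f) atTop (nhds (f 0)))
    (k : ℤ) (hk : k ≠ 0) :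
    ∀ f : ℝ → ℂ, Continuous f → HasCompactSupport f →
      Tendsto
        (fun n => autoCorr ((Λ ∪ ((fun x => (k : ℝ) + x) '' Λ)) ∩ Set.Icc (a n) (b n)) f)
        atTop (nhds (f 0 + (f (k : ℝ) + f (-(k : ℝ))) / 2)) := by
  intro f hf hc
  obtain ⟨r, hr, hsep⟩ := hΛ
  have hk1 : (1:ℝ) ≤ |(k:ℝ)| := by exact_mod_cast Int.one_le_abs hk
  generalize hκ : (k : ℝ) = κ at *
  have hwin := aux_window Λ r hr hsep
  have hwin' := aux_window _ r hr (aux_shift Λ r κ hsep)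
  set Λ' := (fun x => κ + x) '' Λ with hΛ'
  have hwinU : ∀ L : ℝ, ∃ C : ℕ, ∀ p : ℝ, ((Λ ∪ Λ') ∩ Set.Icc p (p + L)).Finite ∧
      ((Λ ∪ Λ') ∩ Set.Icc p (p + L)).ncard ≤ C := by
    intro L
    obtain ⟨C, hC⟩ := hwin L
    obtain ⟨C', hC'⟩ := hwin' L
    refine ⟨C + C', fun p => ?_⟩
    rw [Set.union_inter_distrib_right]
    refine ⟨(hC p).1.union (hC' p).1, (Set.ncard_union_le _ _).trans ?_⟩
    exact add_le_add (hC p).2 (hC' p).2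
  have hfin : ∀ p q, ((Λ ∪ Λ') ∩ Set.Icc p q).Finite := by
    intro p q
    obtain ⟨C, hC⟩ := hwinU (q - p)
    simpa using (hC p).1
  have hfinF : ∀ n, (Λ ∩ Set.Icc (a n) (b n)).Finite := fun n =>
    (hfin (a n) (b n)).subset (Set.inter_subset_inter_left _ Set.subset_union_left)
  let E : ℕ → Finset ℝ := fun n => (hfin (a n) (b n)).toFinset
  let F : ℕ → Finset ℝ := fun n => (hfinF n).toFinset
  let K : ℕ → Finset ℝ := fun n => (F n).image (fun x => κ + x)
  have hEc : ∀ n, (Λ ∪ Λ') ∩ Set.Icc (a n) (b n) = (E n : Set ℝ) := fun n => by simp [E]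
  have hFc : ∀ n, Λ ∩ Set.Icc (a n) (b n) = (F n : Set ℝ) := fun n => by simp [F]
  have hmE : ∀ n x, x ∈ E n ↔ (x ∈ Λ ∨ x - κ ∈ Λ) ∧ a n ≤ x ∧ x ≤ b n := by
    intro n x
    have : x ∈ Λ' ↔ x - κ ∈ Λ := by
      constructor
      · rintro ⟨y, hy, rfl⟩; simpa using hy
      · intro h; exact ⟨_, h, by simp⟩
    simp [E, this]
  have hmF : ∀ n x, x ∈ F n ↔ x ∈ Λ ∧ a n ≤ x ∧ x ≤ b n := by
    intro n x; simp [F]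
  have hmK : ∀ n x, x ∈ K n ↔ x - κ ∈ Λ ∧ a n ≤ x - κ ∧ x - κ ≤ b n := by
    intro n x
    rw [← hmF]
    simp only [K, Finset.mem_image]
    constructor
    · rintro ⟨y, hy, rfl⟩; simpa using hy
    · intro h; exact ⟨_, h, by simp⟩
  have hKsum : ∀ n (g : ℝ → ℂ), ∑ x ∈ K n, g x = ∑ x ∈ F n, g (κ + x) := fun n g =>
    Finset.sum_image (fun x _ y _ h => by simpa using h)
  have hcF : Tendsto (fun n => ((F n).card : ℝ)) atTop atTop := by
    have : ∀ n, (Λ ∩ Set.Icc (a n) (b n)).ncard = (F n).card := fun n => by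
      rw [hFc, Set.ncard_coe_finset]
    simp only [this] at hcard
    exact tendsto_natCast_atTop_atTop.comp hcard
  have hau : ∀ f : ℝ → ℂ, Continuous f → HasCompactSupport f →
      Tendsto (fun n => ((F n).card : ℂ)⁻¹ * ∑ x ∈ F n, ∑ y ∈ F n, f (x - y))
        atTop (nhds (f 0)) := by
    intro f hf hc
    have := hauto f hf hc
    simpa only [hFc, aux_auto] using this
  simp only [hEc, aux_auto]
  -- the error count
  let d : ℕ → ℝ := fun n => ((F n ∩ K n).card : ℝ) + ((F n ∪ K n) \ E n).card +
    (E n \ (F n ∪ K n)).card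
  have hoverlap : Tendsto (fun n => ((F n ∩ K n).card : ℝ) / (F n).card) atTop (nhds 0) := by
    let h : ℝ → ℝ := fun t => max 0 (1 - |t - κ|)
    have hh0 : ∀ t, 0 ≤ h t := fun t => le_max_left _ _
    have hhc : Continuous h := by fun_prop
    have hhs : HasCompactSupport (fun t => (h t : ℂ)) := by
      refine HasCompactSupport.intro (isCompact_closedBall κ 1) ?_
      intro t ht
      simp only [Metric.mem_closedBall, Real.dist_eq, not_le] at ht
      simp only [h]
      rw [max_eq_left (by linarith)]; simp
    have ht := hau (fun t => (h t : ℂ)) (by fun_prop) hhs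
    have hz : h 0 = 0 := by
      simp only [h, zero_sub, abs_neg]
      exact max_eq_left (by linarith)
    have ht' := (Complex.continuous_re.tendsto _).comp ht
    simp only [hz, Complex.ofReal_zero, Complex.zero_re] at ht'
    refine squeeze_zero (fun n => div_nonneg (Nat.cast_nonneg _) (Nat.cast_nonneg _)) (fun n => ?_) ht'
    have : (Complex.re ∘ fun n => ((F n).card : ℂ)⁻¹ * ∑ x ∈ F n, ∑ y ∈ F n, (h (x - y) : ℂ)) n
        = (∑ x ∈ F n, ∑ y ∈ F n, h (x - y)) / (F n).card := by
      have : ((F n).card : ℂ)⁻¹ * ∑ x ∈ F n, ∑ y ∈ F n, (h (x - y) : ℂ) =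
        (((∑ x ∈ F n, ∑ y ∈ F n, h (x - y)) / (F n).card : ℝ) : ℂ) := by
        push_cast
        rw [div_eq_inv_mul]
      simp only [Function.comp, this, Complex.ofReal_re]
    rw [this]
    refine div_le_div_of_nonneg_right ?_ (Nat.cast_nonneg _)
    calc ((F n ∩ K n).card : ℝ) = ∑ x ∈ F n ∩ K n, (1:ℝ) := by simp
      _ ≤ ∑ x ∈ F n ∩ K n, ∑ y ∈ F n, h (x - y) := by
        refine Finset.sum_le_sum fun x hx => ?_
        have hxK := (Finset.mem_inter.1 hx).2
        rw [hmK, ← hmF] at hxK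
        refine le_trans ?_ (Finset.single_le_sum (fun y _ => hh0 (x - y)) hxK)
        simp [h]
      _ ≤ _ := Finset.sum_le_sum_of_subset_of_nonneg Finset.inter_subset_left
        fun x _ _ => Finset.sum_nonneg fun y _ => hh0 _
  obtain ⟨C, hC⟩ := hwinU (2 * |κ|)
  have hbd : ∀ n (T : Finset ℝ), (∀ x ∈ T, (x ∈ Λ ∨ x - κ ∈ Λ) ∧
      ((a n - |κ| ≤ x ∧ x ≤ a n + |κ|) ∨ (b n - |κ| ≤ x ∧ x ≤ b n + |κ|))) →
      (T.card : ℝ) ≤ 2 * C := by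
    intro n T hT
    have : T.card ≤ C + C := by
      rw [← Set.ncard_coe_finset]
      refine le_trans (Set.ncard_le_ncard (t := ((Λ ∪ Λ') ∩ Set.Icc (a n - |κ|) (a n - |κ| + 2 * |κ|))
        ∪ ((Λ ∪ Λ') ∩ Set.Icc (b n - |κ|) (b n - |κ| + 2 * |κ|))) ?_ ((hC _).1.union (hC _).1))
        ((Set.ncard_union_le _ _).trans (add_le_add (hC _).2 (hC _).2))
      intro x hx
      obtain ⟨h1, h2⟩ := hT x hx
      have h1' : x ∈ Λ ∪ Λ' := h1.imp id (fun h => ⟨_, h, by simp⟩)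
      rcases h2 with h2 | h2
      · exact Or.inl ⟨h1', h2.1, by linarith⟩
      · exact Or.inr ⟨h1', h2.1, by linarith⟩
    have h2 : (T.card : ℝ) ≤ C + C := by exact_mod_cast this
    linarith
  have hκ1 := le_abs_self κ
  have hκ2 := neg_abs_le κ
  have hd1 : ∀ n, (((F n ∪ K n) \ E n).card : ℝ) ≤ 2 * C := by
    intro n
    refine hbd n _ fun x hx => ?_
    simp only [Finset.mem_sdiff, Finset.mem_union, hmE, hmF, hmK] at hx
    obtain ⟨h | h, h2⟩ := hx
    · exact absurd ⟨Or.inl h.1, h.2⟩ h2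
    · refine ⟨Or.inr h.1, ?_⟩
      by_cases h3 : a n ≤ x
      · have h4 : b n < x := not_le.1 fun h4 => h2 ⟨Or.inr h.1, h3, h4⟩
        right; constructor <;> linarith [h.2.1, h.2.2]
      · left; constructor <;> linarith [h.2.1, h.2.2]
  have hd2 : ∀ n, ((E n \ (F n ∪ K n)).card : ℝ) ≤ 2 * C := by
    intro n
    refine hbd n _ fun x hx => ?_
    simp only [Finset.mem_sdiff, Finset.mem_union, hmE, hmF, hmK, not_or] at hx
    obtain ⟨⟨h | h, h3⟩, h1, h2⟩ := hx
    · exact absurd ⟨h, h3⟩ h1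
    · refine ⟨Or.inr h, ?_⟩
      by_cases h5 : a n ≤ x - κ
      · have h4 : b n < x - κ := not_le.1 fun h4 => h2 ⟨h, h5, h4⟩
        right; constructor <;> linarith [h3.1, h3.2]
      · left; constructor <;> linarith [h3.1, h3.2]
  have hd : Tendsto (fun n => d n / (F n).card) atTop (nhds 0) := by
    have h1 : Tendsto (fun n => ((F n ∩ K n).card : ℝ) / (F n).card + (4 * C) / (F n).card)
        atTop (nhds (0 + 0)) := hoverlap.add (tendsto_const_nhds.div_atTop hcF)
    rw [add_zero] at h1
    refine squeeze_zero (fun n => div_nonneg (add_nonneg (add_nonneg (Nat.cast_nonneg _)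
      (Nat.cast_nonneg _)) (Nat.cast_nonneg _)) (Nat.cast_nonneg _)) (fun n => ?_) h1
    rw [← add_div]
    have := hd1 n
    have := hd2 n
    refine div_le_div_of_nonneg_right ?_ (Nat.cast_nonneg _)
    simp only [d]
    linarith
  obtain ⟨c, hcb⟩ := aux_bound _ f hf hc hwinU
  have hES : ∀ n, (E n : Set ℝ) ⊆ Λ ∪ Λ' := fun n => by
    rw [← hEc]; exact Set.inter_subset_left
  have hFS : ∀ n, (F n : Set ℝ) ⊆ Λ ∪ Λ' := fun n => by
    rw [← hFc]; exact Set.inter_subset_left.trans Set.subset_union_left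
  have hKS : ∀ n, (K n : Set ℝ) ⊆ Λ ∪ Λ' := fun n x hx =>
    Or.inr ⟨x - κ, ((hmK n x).1 hx).1, by simp⟩
  have hcore := fun n => aux_core (F n) (K n) (E n) f c (fun x => (hcb _ (hES n) x).1)
    (fun x => (hcb _ (hFS n) x).2) (fun x => (hcb _ (hKS n) x).2)
  have hgen : ∀ (u v : ℕ → ℂ) (l : ℂ) (c : ℝ), (∀ n, ‖u n - v n‖ ≤ d n * c) →
      Tendsto (fun n => ((F n).card : ℂ)⁻¹ * v n) atTop (nhds l) →
      Tendsto (fun n => ((F n).card : ℂ)⁻¹ * u n) atTop (nhds l) := by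
    intro u v l c h hv
    have h0 : Tendsto (fun n => ((F n).card : ℂ)⁻¹ * (u n - v n)) atTop (nhds 0) := by
      have h2 := hd.mul_const c
      rw [zero_mul] at h2
      refine squeeze_zero_norm (fun n => ?_) h2
      rw [norm_mul, norm_inv, Complex.norm_natCast, div_mul_eq_mul_div, div_eq_inv_mul]
      exact mul_le_mul_of_nonneg_left (h n) (inv_nonneg.2 (Nat.cast_nonneg _))
    have := h0.add hv
    rw [zero_add] at this
    refine this.congr fun n => by ring
  have hne : ∀ᶠ n in atTop, ((F n).card : ℂ) ≠ 0 := by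
    filter_upwards [hcF.eventually_gt_atTop 0] with n hn
    exact_mod_cast hn.ne'
  have hcardE : Tendsto (fun n => ((F n).card : ℂ)⁻¹ * ((E n).card : ℂ)) atTop (nhds 2) := by
    refine hgen _ (fun n => ((F n).card : ℂ) + (F n).card) 2 1 (fun n => ?_) ?_
    · have := aux_incl (F n) (K n) (E n) (fun _ => 1) 1 (by simp)
      rw [hKsum] at this
      simpa [d] using this
    · refine tendsto_const_nhds.congr' ?_
      filter_upwards [hne] with n hn
      field_simp
      norm_num
  have hf1 := hau (fun t => f (t - κ)) (by fun_prop)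
    (hc.comp_homeomorph (Homeomorph.subRight κ))
  have hf2 := hau (fun t => f (t + κ)) (by fun_prop)
    (hc.comp_homeomorph (Homeomorph.addRight κ))
  have hf0 := hau f hf hc
  have hSum := hgen _ _ (f 0 + f (0 - κ) + f (0 + κ) + f 0) (3 * c) hcore (by
    refine (((hf0.add hf1).add hf2).add hf0).congr fun n => ?_
    simp only [hKsum, ← mul_add]
    congr 2
    · congr 2
      · exact Finset.sum_congr rfl fun x _ => Finset.sum_congr rfl fun y _ => by ring_nf
      · exact funext fun x => Finset.sum_congr rfl fun y _ => by ring_nf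
    · exact Finset.sum_congr rfl fun x _ => Finset.sum_congr rfl fun y _ => by ring_nf)
  have hfinal := (hcardE.inv₀ two_ne_zero).mul hSum
  have hl : (2:ℂ)⁻¹ * (f 0 + f (0 - κ) + f (0 + κ) + f 0) = f 0 + (f κ + f (-κ)) / 2 := by
    rw [zero_sub, zero_add]; ring
  rw [hl] at hfinal
  refine hfinal.congr' ?_
  filter_upwards [hne] with n hn
  rw [mul_inv, inv_inv]
  field_simp
end
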